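/- With λ(t):=λ₁(Γ_t) and μ(L) the Sturm–Liouville ground energy with potential λ on (L,∞) (Neumann at L), there exists a unique L* ∈ (−1,∞) such that μ(L*) = inf_{L>−1} μ(L); moreover L* belongs to (−1,0) and satisfies μ(L*) = λ(L*). -/

import Mathlib

/-!
Write `λ = lamR` and `μ = muSL`. The argument separates the one-dimensional problem, valid for
every potential with the properties collected in `IsPot`, from the verification of these properties
for `λ` (`isPot_lamR`).

*The one-dimensional problem.* On `(-1,0]` the potential is `π²/(2(1+t)²)`, and on `[0,∞)` it is
nondecreasing, bounded by `π²`, and somewhere above `λ(0)`. Hence `μ(0) > λ(0)`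
(`IsPot.mu_zero`), while `λ` blows up at `-1`, so `μ` and `λ` meet at some `a ∈ (-1,0)`
(`IsPot.exists_crossing`). Put `m = λ(a) = μ(a)`.
For `L > a`, continuing a test function on `(s,∞)` by the constant `q(s)` to `(a,s)`
(`IsPot.ext_const`) shows that the form of `-d²/dt² + λ - m` on `(s,∞)` is at least
`q(s)² ∫_a^s (m - λ)`. This is a positive multiple of `q(s)²` as long as `λ` has stayed below `m`,
and slightly longer; beyond that point `λ - m` is bounded below by a positive constant. Grönwall's
inequality turns these facts into coercivity of the form on `(L,∞)`, so `μ(L) > m`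
(`IsPot.strict_right`). For `L < a` the potential exceeds `m` on `(L,a)`, which again gives
coercivity (`IsPot.strict_left`). Therefore `a` is the only minimizer, and `μ(a) = λ(a)`.

*The potential.* For `-1 < R ≤ 0` the guide is a square of side `1 + R` with Dirichlet conditions on
two adjacent sides; the sharp one-dimensional Poincaré inequality and a product of sines give
`λ(R) = π²/(2(1+R)²)` (`lamR_left`). For `R ≥ 0`, enlarging `R` adds straight pieces of the arms,
whose transverse energy is at least `π²`, and a trial function shows `λ(R) ≤ π²`
(`lamR_le_pi_sq`); so `λ` is nondecreasing (`lamR_mono`). Finally a Riccati bound on strips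
that cross the corner and run through an arm of length one gives `λ(1) > π²/2 = λ(0)`
(`lamR_one_gt`).
-/

noncomputable section
open MeasureTheory Set Real

/-- The interval `I = (-1,0)`. -/
def II : Set ℝ := Set.Ioo (-1) 0

/-- The broken guide `Γ = {x ∈ ℝ² : -1 < min(x₁,x₂) < 0}`. -/
def Gam : Set (ℝ × ℝ) := {p | -1 < min p.1 p.2 ∧ min p.1 p.2 < 0}

/-- The box `□_L = {x : max(|x₁+1|,|x₂+1|) < L}`. -/
def Box (L : ℝ) : Set (ℝ × ℝ) := {p | |p.1 + 1| < L ∧ |p.2 + 1| < L}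

/-- The finite guide `Γ_R = Γ ∩ □_{R+1}`. -/
def GamR (R : ℝ) : Set (ℝ × ℝ) := Gam ∩ Box (R + 1)

/-- The Neumann part `Σ_R = ∂Γ_R ∩ ∂□_{R+1}` of the boundary. -/
def Sig (R : ℝ) : Set (ℝ × ℝ) := frontier (GamR R) ∩ frontier (Box (R + 1))

/-- The Dirichlet part `∂Γ_R ∖ Σ_R` of the boundary. -/
def DirB (R : ℝ) : Set (ℝ × ℝ) := frontier (GamR R) \ Sig R

/-- Squared gradient `|∇u|² = (∂₁u)² + (∂₂u)²`. -/
def gradSq2 (u : ℝ × ℝ → ℝ) (p : ℝ × ℝ) : ℝ :=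
  (fderiv ℝ u p (1, 0)) ^ 2 + (fderiv ℝ u p (0, 1)) ^ 2

/-- Admissible functions for the mixed problem on `Γ_R`: `C¹` up to the boundary
(modelled by a globally `C¹` extension) vanishing on the Dirichlet part. -/
def AdmR (R : ℝ) (u : ℝ × ℝ → ℝ) : Prop :=
  ContDiff ℝ 1 u ∧ ∀ p ∈ DirB R, u p = 0

/-- First Rayleigh quotient `λ₁(Γ_R)` of the mixed Dirichlet–Neumann Laplacian on `Γ_R`. -/
def lamR (R : ℝ) : ℝ :=
  sInf {r | ∃ u : ℝ × ℝ → ℝ, AdmR R u ∧ (∫ p in GamR R, (u p) ^ 2) ≠ 0 ∧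
    r = (∫ p in GamR R, gradSq2 u p) / ∫ p in GamR R, (u p) ^ 2}

/-- First Rayleigh quotient `λ₁(Γ)` of the Dirichlet Laplacian on the broken guide `Γ`. -/
def lamG : ℝ :=
  sInf {r | ∃ u : ℝ × ℝ → ℝ, ContDiff ℝ 1 u ∧ HasCompactSupport u ∧ tsupport u ⊆ Gam ∧
    (∫ p in Gam, (u p) ^ 2) ≠ 0 ∧
    r = (∫ p in Gam, gradSq2 u p) / ∫ p in Gam, (u p) ^ 2}

/-- `ω = √(π² − λ₁(Γ))`. -/
def omega : ℝ := Real.sqrt (π ^ 2 - lamG)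

/-- Ground energy `μ(L)` of the Sturm–Liouville operator `q ↦ -q'' + λ q` on `(L,∞)`
with Neumann condition at `L` and potential `λ(t) = λ₁(Γ_t)`, defined as the infimum of
Rayleigh quotients over (`C¹` representatives of) `H¹(L,∞)`. -/
def muSL (L : ℝ) : ℝ :=
  sInf {r | ∃ q : ℝ → ℝ, ContDiff ℝ 1 q ∧
    IntegrableOn (fun t => (q t) ^ 2) (Set.Ioi L) ∧
    IntegrableOn (fun t => (deriv q t) ^ 2) (Set.Ioi L) ∧
    (∫ t in Set.Ioi L, (q t) ^ 2) ≠ 0 ∧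
    r = (∫ t in Set.Ioi L, ((deriv q t) ^ 2 + lamR t * (q t) ^ 2)) /
      ∫ t in Set.Ioi L, (q t) ^ 2}

/-! ### The Sturm–Liouville form for a general potential -/

/-- The properties of the potential `t ↦ λ₁(Γ_t)` that the one-dimensional argument uses. -/
structure IsPot (V : ℝ → ℝ) : Prop where
  left : ∀ t, -1 < t → t ≤ 0 → V t = π ^ 2 / (2 * (1 + t) ^ 2)
  mono : MonotoneOn V (Ici 0)
  le : ∀ t, 0 ≤ t → V t ≤ π ^ 2
  big : ∃ T, 0 < T ∧ π ^ 2 / 2 < V T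

/-- `C¹` representatives of the form domain `H¹(L,∞)`. -/
def AdmSL (L : ℝ) (q : ℝ → ℝ) : Prop :=
  ContDiff ℝ 1 q ∧ IntegrableOn (fun t => (q t) ^ 2) (Ioi L) ∧
    IntegrableOn (fun t => (deriv q t) ^ 2) (Ioi L)

/-- The ground energy `μ(L)` for a general potential `V`. -/
def muV (V : ℝ → ℝ) (L : ℝ) : ℝ :=
  sInf {r | ∃ q : ℝ → ℝ, ContDiff ℝ 1 q ∧
    IntegrableOn (fun t => (q t) ^ 2) (Ioi L) ∧
    IntegrableOn (fun t => (deriv q t) ^ 2) (Ioi L) ∧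
    (∫ t in Ioi L, (q t) ^ 2) ≠ 0 ∧
    r = (∫ t in Ioi L, ((deriv q t) ^ 2 + V t * (q t) ^ 2)) / ∫ t in Ioi L, (q t) ^ 2}

/-- The quadratic form of `-d²/dt² + V - m` on `(s,∞)` (Neumann at `s`). -/
def formB (V : ℝ → ℝ) (m s : ℝ) (q : ℝ → ℝ) : ℝ :=
  ∫ t in Ioi s, ((deriv q t) ^ 2 + (V t - m) * (q t) ^ 2)

theorem AdmSL.mono {L s : ℝ} {q : ℝ → ℝ} (h : AdmSL L q) (hs : L ≤ s) : AdmSL s q :=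
  ⟨h.1, h.2.1.mono_set (Ioi_subset_Ioi hs), h.2.2.mono_set (Ioi_subset_Ioi hs)⟩

theorem AdmSL.cont {L : ℝ} {q : ℝ → ℝ} (h : AdmSL L q) : Continuous q := h.1.continuous

theorem AdmSL.contd {L : ℝ} {q : ℝ → ℝ} (h : AdmSL L q) : Continuous (deriv q) :=
  h.1.continuous_deriv_one

namespace IsPot
variable {V : ℝ → ℝ}

theorem anti (hV : IsPot V) {s t : ℝ} (h1 : -1 < s) (h2 : s < t) (h3 : t ≤ 0) : V t < V s := by
  rw [hV.left s h1 (by linarith), hV.left t (by linarith) h3]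
  have : 0 < 1 + s := by linarith
  gcongr

theorem zero_eq (hV : IsPot V) : V 0 = π ^ 2 / 2 := by
  rw [hV.left 0 (by norm_num) le_rfl]; norm_num

theorem V0_le (hV : IsPot V) {t : ℝ} (h1 : -1 < t) : V 0 ≤ V t := by
  rcases lt_trichotomy t 0 with h | h | h
  · exact (hV.anti h1 h le_rfl).le
  · rw [h]
  · exact hV.mono (mem_Ici.2 le_rfl) (mem_Ici.2 h.le) h.le

theorem nonneg (hV : IsPot V) {t : ℝ} (h1 : -1 < t) : 0 ≤ V t := by
  have := hV.V0_le h1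
  rw [hV.zero_eq] at this
  have : 0 < π ^ 2 := by positivity
  linarith

theorem exists_bound (hV : IsPot V) {a : ℝ} (ha : -1 < a) (m : ℝ) :
    ∃ M, 0 < M ∧ ∀ t, a ≤ t → |V t - m| ≤ M := by
  refine ⟨V (min a 0) + π ^ 2 + |m|, ?_, ?_⟩
  · have := hV.nonneg (t := min a 0) (lt_min ha (by norm_num))
    have : 0 < π ^ 2 := by positivity
    have := abs_nonneg m
    linarith
  · intro t ht
    have h0 := hV.nonneg (t := min a 0) (lt_min ha (by norm_num))
    have h1 := hV.nonneg (t := t) (by linarith)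
    have hp : 0 < π ^ 2 := by positivity
    have : V t ≤ V (min a 0) + π ^ 2 := by
      rcases le_or_gt t 0 with h | h
      · rw [min_eq_left (ht.trans h)] at *
        rcases ht.eq_or_lt with h' | h'
        · rw [← h']; linarith
        · linarith [hV.anti ha h' h]
      · have := hV.le t h.le
        linarith
    calc |V t - m| ≤ |V t| + |m| := abs_sub _ _
      _ ≤ _ := by rw [abs_of_nonneg h1]; linarith

theorem aesm (hV : IsPot V) {a : ℝ} (ha : -1 ≤ a) :
    AEStronglyMeasurable V (volume.restrict (Ioi a)) := by
  have hm : Measurable (fun t => if t ≤ 0 then π ^ 2 / (2 * (1 + t) ^ 2) else V (max t 0)) := by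
    refine Measurable.ite measurableSet_Iic (by fun_prop) ?_
    apply Monotone.measurable
    intro s t hst
    exact hV.mono (mem_Ici.2 (le_max_right _ _)) (mem_Ici.2 (le_max_right _ _)) (max_le_max_right _ hst)
  refine hm.aestronglyMeasurable.congr ?_
  filter_upwards [ae_restrict_mem measurableSet_Ioi] with t ht
  simp only [mem_Ioi] at ht
  split_ifs with h
  · rw [hV.left t (by linarith) h]
  · rw [max_eq_left (by linarith)]

theorem integrableOn_V_mul (hV : IsPot V) {L : ℝ} (hL : -1 < L) (m : ℝ) {f : ℝ → ℝ}
    (hf : IntegrableOn f (Ioi L)) : IntegrableOn (fun t => (V t - m) * f t) (Ioi L) := by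
  obtain ⟨M, hM, hb⟩ := hV.exists_bound hL m
  refine Integrable.bdd_mul (c := M) hf ((hV.aesm hL.le).sub aestronglyMeasurable_const) ?_
  filter_upwards [ae_restrict_mem measurableSet_Ioi] with t ht
  exact hb t (le_of_lt ht)

theorem integrableOn_V (hV : IsPot V) {a b : ℝ} (ha : -1 < a) (m : ℝ) (hab : a ≤ b) :
    IntervalIntegrable (fun t => V t - m) volume a b := by
  obtain ⟨M, hM, hb⟩ := hV.exists_bound ha m
  rw [intervalIntegrable_iff_integrableOn_Ioc_of_le hab]
  refine Integrable.mono' (g := fun _ => M) (by simp)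
    (((hV.aesm ha.le).sub aestronglyMeasurable_const).mono_measure
      (Measure.restrict_mono Ioc_subset_Ioi_self le_rfl)) ?_
  filter_upwards [ae_restrict_mem measurableSet_Ioc] with t ht
  exact hb t (le_of_lt ht.1)

theorem intervalIntegrable_mul (hV : IsPot V) {a b : ℝ} (ha : -1 < a) (m : ℝ) (hab : a ≤ b)
    {f : ℝ → ℝ} (hf : Continuous f) :
    IntervalIntegrable (fun t => (V t - m) * f t) volume a b :=
  (hV.integrableOn_V ha m hab).mul_continuousOn hf.continuousOn

theorem integrableOn_form (hV : IsPot V) {L : ℝ} (hL : -1 < L) (m : ℝ) {q : ℝ → ℝ}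
    (hq : AdmSL L q) :
    IntegrableOn (fun t => (deriv q t) ^ 2 + (V t - m) * (q t) ^ 2) (Ioi L) :=
  hq.2.2.add (hV.integrableOn_V_mul hL m hq.2.1)

theorem formB_eq (hV : IsPot V) {L : ℝ} (hL : -1 < L) (m : ℝ) {q : ℝ → ℝ} (hq : AdmSL L q) :
    formB V m L q = (∫ t in Ioi L, ((deriv q t) ^ 2 + V t * (q t) ^ 2))
      - m * ∫ t in Ioi L, (q t) ^ 2 := by
  rw [← integral_const_mul, ← integral_sub]
  · unfold formB; congr 1; ext t; ring
  · have := hV.integrableOn_form hL 0 hq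
    simp only [sub_zero] at this
    exact this
  · exact hq.2.1.const_mul m

/-- Splitting the form at an interior point. -/
theorem formB_split (hV : IsPot V) {L s : ℝ} (hL : -1 < L) (hs : L ≤ s) (m : ℝ) {q : ℝ → ℝ}
    (hq : AdmSL L q) :
    formB V m L q = (∫ t in L..s, (deriv q t) ^ 2) + (∫ t in L..s, (V t - m) * (q t) ^ 2)
      + formB V m s q := by
  unfold formB
  rw [← intervalIntegral.integral_interval_add_Ioi (hV.integrableOn_form hL m hq)
    (hV.integrableOn_form (by linarith) m (hq.mono hs)), intervalIntegral.integral_add]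
  · exact (hq.contd.pow 2).intervalIntegrable _ _
  · exact hV.intervalIntegrable_mul hL m hs (hq.cont.pow 2)

theorem norm_split {L s : ℝ} (hs : L ≤ s) {q : ℝ → ℝ} (hq : AdmSL L q) :
    ∫ t in Ioi L, (q t) ^ 2 = (∫ t in L..s, (q t) ^ 2) + ∫ t in Ioi s, (q t) ^ 2 :=
  (intervalIntegral.integral_interval_add_Ioi hq.2.1 (hq.mono hs).2.1).symm

theorem integral_V_lower (hV : IsPot V) {a b m κ : ℝ} (ha : -1 < a) (hab : a ≤ b)
    (hκ : ∀ t ∈ Icc a b, κ ≤ V t - m) {f : ℝ → ℝ} (hf : Continuous f) (hf0 : ∀ t, 0 ≤ f t) :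
    κ * ∫ t in a..b, f t ≤ ∫ t in a..b, (V t - m) * f t := by
  rw [← intervalIntegral.integral_const_mul]
  refine intervalIntegral.integral_mono_on hab ((hf.const_mul κ).intervalIntegrable _ _)
    (hV.intervalIntegrable_mul ha m hab hf) fun t ht => ?_
  exact mul_le_mul_of_nonneg_right (hκ t ht) (hf0 t)

/-- Where `V ≥ m + κ` on the whole half-line, the form is bounded below by `κ`. -/
theorem formB_lower (hV : IsPot V) {a m κ : ℝ} (ha : -1 < a)
    (hκ : ∀ t, a ≤ t → κ ≤ V t - m) {q : ℝ → ℝ} (hq : AdmSL a q) :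
    (∫ t in Ioi a, (deriv q t) ^ 2) + κ * ∫ t in Ioi a, (q t) ^ 2 ≤ formB V m a q := by
  unfold formB
  rw [← integral_const_mul, ← integral_add hq.2.2 (hq.2.1.const_mul κ)]
  refine setIntegral_mono_on (hq.2.2.add (hq.2.1.const_mul κ)) (hV.integrableOn_form ha m hq)
    measurableSet_Ioi fun t ht => ?_
  have := mul_le_mul_of_nonneg_right (hκ t (le_of_lt ht)) (sq_nonneg (q t))
  change (deriv q t) ^ 2 + κ * (q t) ^ 2 ≤ _
  linarith

theorem muV_mul_le (hV : IsPot V) {L : ℝ} (hL : -1 < L) {q : ℝ → ℝ} (hq : AdmSL L q) :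
    muV V L * (∫ t in Ioi L, (q t) ^ 2) ≤
      ∫ t in Ioi L, ((deriv q t) ^ 2 + V t * (q t) ^ 2) := by
  have key : ∀ q : ℝ → ℝ, 0 ≤ ∫ t in Ioi L, ((deriv q t) ^ 2 + V t * (q t) ^ 2) := by
    intro q
    refine setIntegral_nonneg measurableSet_Ioi fun t ht => ?_
    have := hV.nonneg (t := t) (hL.trans ht)
    positivity
  have hN : 0 ≤ ∫ t in Ioi L, (q t) ^ 2 := integral_nonneg fun t => sq_nonneg _
  rcases hN.eq_or_lt with h | h
  · rw [← h, mul_zero]; exact key q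
  · rw [← le_div_iff₀ h]
    refine csInf_le ⟨0, ?_⟩ ⟨q, hq.1, hq.2.1, hq.2.2, h.ne', rfl⟩
    rintro r ⟨p, -, -, -, -, rfl⟩
    exact div_nonneg (key p) (integral_nonneg fun t => sq_nonneg _)

theorem formB_nonneg (hV : IsPot V) {L m : ℝ} (hL : -1 < L) (hm : m ≤ muV V L) {q : ℝ → ℝ}
    (hq : AdmSL L q) : 0 ≤ formB V m L q := by
  rw [hV.formB_eq hL m hq]
  have := hV.muV_mul_le hL hq
  have hN : 0 ≤ ∫ t in Ioi L, (q t) ^ 2 := integral_nonneg fun t => sq_nonneg _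
  nlinarith [mul_le_mul_of_nonneg_right hm hN]

end IsPot

theorem deriv_exp_neg_mul (ε : ℝ) :
    deriv (fun t : ℝ => rexp (-ε * t)) = fun t => -ε * rexp (-ε * t) := by
  ext t
  have := ((hasDerivAt_id t).const_mul (-ε)).exp
  simp only [id, mul_one] at this
  rw [this.deriv]; ring

theorem admSL_exp {ε : ℝ} (hε : 0 < ε) (L : ℝ) : AdmSL L (fun t => rexp (-ε * t)) := by
  have h2 : ∀ t : ℝ, rexp (-ε * t) ^ 2 = rexp (-(2 * ε) * t) := by
    intro t; rw [← Real.exp_nat_mul]; congr 1; push_cast; ring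
  have hi : IntegrableOn (fun t => rexp (-ε * t) ^ 2) (Ioi L) := by
    simp only [h2]; exact exp_neg_integrableOn_Ioi L (by linarith)
  refine ⟨by fun_prop, hi, ?_⟩
  rw [deriv_exp_neg_mul]
  simp only [mul_pow]
  exact hi.const_mul _

theorem norm_exp_pos {ε : ℝ} (hε : 0 < ε) (L : ℝ) :
    0 < ∫ t in Ioi L, (fun t => rexp (-ε * t)) t ^ 2 := by
  have h2 : ∀ t : ℝ, rexp (-ε * t) ^ 2 = rexp (-(2 * ε) * t) := by
    intro t; rw [← Real.exp_nat_mul]; congr 1; push_cast; ring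
  simp only [h2]
  rw [integral_exp_mul_Ioi (by linarith)]
  rw [neg_div_neg_eq]
  positivity

theorem IsPot.le_muV {V : ℝ → ℝ} (hV : IsPot V) {L m : ℝ} (hL : -1 < L)
    (h : ∀ q, AdmSL L q → 0 ≤ formB V m L q) : m ≤ muV V L := by
  refine le_csInf ⟨_, fun t => rexp (-1 * t), (admSL_exp one_pos L).1, (admSL_exp one_pos L).2.1,
    (admSL_exp one_pos L).2.2, (norm_exp_pos one_pos L).ne', rfl⟩ ?_
  rintro r ⟨q, h1, h2, h3, h4, rfl⟩
  have hN : 0 < ∫ t in Ioi L, (q t) ^ 2 :=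
    lt_of_le_of_ne (integral_nonneg fun t => sq_nonneg _) h4.symm
  have := h q ⟨h1, h2, h3⟩
  rw [hV.formB_eq hL m ⟨h1, h2, h3⟩] at this
  rw [le_div_iff₀ hN]; linarith

theorem IsPot.lt_muV {V : ℝ → ℝ} (hV : IsPot V) {L m ε : ℝ} (hL : -1 < L) (hε : 0 < ε)
    (h : ∀ q, AdmSL L q → ε * (∫ t in Ioi L, (q t) ^ 2) ≤ formB V m L q) : m < muV V L := by
  refine lt_of_lt_of_le (lt_add_of_pos_right m hε) (hV.le_muV hL fun q hq => ?_)
  have := h q hq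
  rw [hV.formB_eq hL _ hq] at *
  linarith

/-- Cauchy–Schwarz against the constant function. -/
theorem sq_integral_le {a b : ℝ} (hab : a ≤ b) {f : ℝ → ℝ} (hf : Continuous f) :
    (∫ t in a..b, f t) ^ 2 ≤ (b - a) * ∫ t in a..b, (f t) ^ 2 := by
  rcases hab.eq_or_lt with h | h
  · simp [h]
  have hl : 0 < b - a := by linarith
  set I := ∫ t in a..b, f t with hI
  have h0 : 0 ≤ ∫ t in a..b, (f t - I / (b - a)) ^ 2 :=
    intervalIntegral.integral_nonneg hab fun t _ => sq_nonneg _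
  have h1 : ∫ t in a..b, (f t - I / (b - a)) ^ 2 =
      (∫ t in a..b, (f t) ^ 2) - 2 * (I / (b - a)) * I + (b - a) * (I / (b - a)) ^ 2 := by
    have : ∀ t, (f t - I / (b - a)) ^ 2 =
      ((f t) ^ 2 - 2 * (I / (b - a)) * f t) + (I / (b - a)) ^ 2 := fun t => by ring
    simp only [this]
    rw [intervalIntegral.integral_add, intervalIntegral.integral_sub,
      intervalIntegral.integral_const_mul, intervalIntegral.integral_const, smul_eq_mul]
    all_goals exact Continuous.intervalIntegrable (by fun_prop) _ _
  rw [h1] at h0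
  have h2 : (∫ t in a..b, (f t) ^ 2) - 2 * (I / (b - a)) * I + (b - a) * (I / (b - a)) ^ 2
      = (∫ t in a..b, (f t) ^ 2) - I ^ 2 / (b - a) := by field_simp; ring
  rw [h2, sub_nonneg, div_le_iff₀ hl] at h0
  linarith

/-- Pointwise control of a `C¹` function by its value elsewhere and its Dirichlet integral. -/
theorem sq_le_of_mem {a b s t : ℝ} {q : ℝ → ℝ} (hq : ContDiff ℝ 1 q) (hs : s ∈ Icc a b)
    (ht : t ∈ Icc a b) :
    (q t) ^ 2 ≤ 2 * (q s) ^ 2 + 2 * (b - a) * ∫ x in a..b, (deriv q x) ^ 2 := by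
  have hc : Continuous (deriv q) := hq.continuous_deriv_one
  have key : ∀ s t, s ∈ Icc a b → t ∈ Icc a b → s ≤ t →
      (q t - q s) ^ 2 ≤ (b - a) * ∫ x in a..b, (deriv q x) ^ 2 := by
    intro s t hs ht hst
    rw [← intervalIntegral.integral_deriv_eq_sub (fun x _ => hq.differentiable one_ne_zero x)
      (hc.intervalIntegrable _ _)]
    refine (sq_integral_le hst hc).trans ?_
    have hmono : ∫ x in s..t, (deriv q x) ^ 2 ≤ ∫ x in a..b, (deriv q x) ^ 2 :=
      intervalIntegral.integral_mono_interval hs.1 hst ht.2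
        (Filter.Eventually.of_forall fun x => sq_nonneg _) ((hc.pow 2).intervalIntegrable _ _)
    have : 0 ≤ ∫ x in s..t, (deriv q x) ^ 2 :=
      intervalIntegral.integral_nonneg hst fun _ _ => sq_nonneg _
    have h1 := hs.1
    have h2 := ht.2
    have h3 : 0 ≤ b - a := by linarith
    gcongr
  have : (q t - q s) ^ 2 ≤ (b - a) * ∫ x in a..b, (deriv q x) ^ 2 := by
    rcases le_total s t with h | h
    · exact key s t hs ht h
    · rw [← neg_sub, neg_sq]; exact key t s ht hs h
  nlinarith [sq_nonneg (q t - 2 * q s)]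

/-- `sq_le_of_mem`, averaged over the reference point. -/
theorem sq_le_avg {a b c d t : ℝ} {q : ℝ → ℝ} (hq : ContDiff ℝ 1 q) (hac : a ≤ c) (hcd : c ≤ d)
    (hdb : d ≤ b) (ht : t ∈ Icc a b) :
    (d - c) * (q t) ^ 2 ≤ 2 * (∫ x in c..d, (q x) ^ 2)
      + 2 * (d - c) * (b - a) * ∫ x in a..b, (deriv q x) ^ 2 := by
  have hc : Continuous q := hq.continuous
  set J := ∫ x in a..b, (deriv q x) ^ 2
  have : ∫ _ in c..d, (q t) ^ 2 ≤ ∫ x in c..d, (2 * (q x) ^ 2 + 2 * (b - a) * J) :=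
    intervalIntegral.integral_mono_on hcd (by simp)
      (Continuous.intervalIntegrable (by fun_prop) _ _)
      fun x hx => sq_le_of_mem hq ⟨by linarith [hx.1], by linarith [hx.2]⟩ ht
  rw [intervalIntegral.integral_const, smul_eq_mul, intervalIntegral.integral_add,
    intervalIntegral.integral_const_mul, intervalIntegral.integral_const, smul_eq_mul] at this
  · linarith
  all_goals exact Continuous.intervalIntegrable (by fun_prop) _ _

/-! ### Extending test functions to the left -/

/-- A `C¹` function continuing `q` to the left of `s` by the nearly constant profile
`q(s) + ε q'(s) (exp((t-s)/ε) - 1)`. -/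
theorem exists_leftExt {s : ℝ} {q : ℝ → ℝ} (hq : ContDiff ℝ 1 q) {ε : ℝ} (hε : 0 < ε) :
    ∃ p : ℝ → ℝ, ContDiff ℝ 1 p ∧ (∀ t, s ≤ t → p t = q t) ∧
      (∀ t, s ≤ t → deriv p t = deriv q t) ∧
      (∀ t, t ≤ s → p t = q s + deriv q s * ε * (rexp ((t - s) / ε) - 1)) ∧
      (∀ t, t ≤ s → deriv p t = deriv q s * rexp ((t - s) / ε)) := by
  have hqc : Continuous (deriv q) := hq.continuous_deriv_one
  set d : ℝ → ℝ := fun τ => deriv q (max τ s) * rexp (min (τ - s) 0 / ε) with hd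
  have hdc : Continuous d := by fun_prop
  have hp : ∀ t, HasDerivAt (fun t => q s + ∫ τ in s..t, d τ) (d t) t := fun t =>
    (intervalIntegral.integral_hasDerivAt_right (hdc.intervalIntegrable _ _)
      (hdc.stronglyMeasurableAtFilter _ _) hdc.continuousAt).const_add _
  have hder : deriv (fun t => q s + ∫ τ in s..t, d τ) = d := funext fun t => (hp t).deriv
  have hR : ∀ t, s ≤ t → d t = deriv q t := by
    intro t ht
    simp [hd, max_eq_left ht, min_eq_right (sub_nonneg.2 ht)]
  have hL : ∀ t, t ≤ s → d t = deriv q s * rexp ((t - s) / ε) := by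
    intro t ht
    simp [hd, max_eq_right ht, min_eq_left (sub_nonpos.2 ht)]
  refine ⟨fun t => q s + ∫ τ in s..t, d τ, ?_, ?_, ?_, ?_, ?_⟩
  · rw [contDiff_one_iff_deriv, hder]
    exact ⟨fun t => (hp t).differentiableAt, hdc⟩
  · intro t ht
    have : ∫ τ in s..t, d τ = ∫ τ in s..t, deriv q τ :=
      intervalIntegral.integral_congr fun τ hτ => by
        rw [uIcc_of_le ht] at hτ; exact hR τ hτ.1
    simp only [this]
    rw [intervalIntegral.integral_deriv_eq_sub (fun x _ => hq.differentiable one_ne_zero x)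
      (hqc.intervalIntegrable _ _)]
    ring
  · intro t ht; rw [hder]; exact hR t ht
  · intro t ht
    have : ∫ τ in s..t, d τ = ∫ τ in s..t, deriv q s * rexp ((τ - s) / ε) :=
      intervalIntegral.integral_congr fun τ hτ => by
        rw [uIcc_of_ge ht] at hτ; exact hL τ hτ.2
    simp only [this]
    have h1 : ∀ τ ∈ uIcc s t, HasDerivAt (fun τ => deriv q s * ε * rexp ((τ - s) / ε))
        (deriv q s * rexp ((τ - s) / ε)) τ := by
      intro τ _
      have := ((((hasDerivAt_id τ).sub_const s).div_const ε).exp).const_mul (deriv q s * ε)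
      refine this.congr_deriv ?_
      simp only [id]
      field_simp
    rw [intervalIntegral.integral_eq_sub_of_hasDerivAt h1
      (Continuous.intervalIntegrable (by fun_prop) _ _)]
    simp; ring
  · intro t ht; rw [hder]; exact hL t ht

/-- Testing the form on `(a,∞)` with the continuation of `q` by the constant `q(s)` on `(a,s)`. -/
theorem IsPot.ext_const {V : ℝ → ℝ} (hV : IsPot V) {a s m : ℝ} (ha : -1 < a) (has : a ≤ s)
    (h : ∀ p, AdmSL a p → 0 ≤ formB V m a p) {q : ℝ → ℝ} (hq : AdmSL s q) :
    0 ≤ (∫ t in a..s, (V t - m)) * (q s) ^ 2 + formB V m s q := by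
  obtain ⟨M, hM, hb⟩ := hV.exists_bound ha m
  set D := deriv q s with hD
  have key : ∀ ε : ℝ, 0 < ε → 0 ≤ D ^ 2 * ε +
      ((∫ t in a..s, (V t - m)) * (q s) ^ 2
        + M * (|D| * ε * (2 * |q s| + |D| * ε)) * (s - a)) + formB V m s q := by
    intro ε hε
    obtain ⟨p, hp, hpR, hdR, hpL, hdL⟩ := exists_leftExt (s := s) hq.1 hε
    have hu : Ioi a = Ioc a s ∪ Ioi s := (Ioc_union_Ioi_eq_Ioi has).symm
    have hpc := hp.continuous
    have hdc : Continuous (deriv p) := hp.continuous_deriv_one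
    have hadm : AdmSL a p := by
      refine ⟨hp, ?_, ?_⟩
      · rw [hu]
        refine ((hpc.pow 2).integrableOn_Ioc).union (hq.2.1.congr_fun ?_ measurableSet_Ioi)
        intro t ht
        simp only [Pi.pow_apply, hpR t (le_of_lt ht)]
      · rw [hu]
        refine ((hdc.pow 2).integrableOn_Ioc).union (hq.2.2.congr_fun ?_ measurableSet_Ioi)
        intro t ht
        simp only [Pi.pow_apply, hdR t (le_of_lt ht)]
    have h0 := h p hadm
    rw [hV.formB_split ha has m hadm] at h0
    have e1 : formB V m s p = formB V m s q := by
      refine setIntegral_congr_fun measurableSet_Ioi fun t ht => ?_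
      simp only [hpR t (le_of_lt ht), hdR t (le_of_lt ht)]
    have e2 : ∫ t in a..s, (deriv p t) ^ 2 ≤ D ^ 2 * ε := by
      have h1 : ∀ τ ∈ uIcc a s, HasDerivAt (fun τ => D ^ 2 * ε * rexp ((τ - s) / ε))
          (D ^ 2 * rexp ((τ - s) / ε)) τ := by
        intro τ _
        have := ((((hasDerivAt_id τ).sub_const s).div_const ε).exp).const_mul (D ^ 2 * ε)
        refine this.congr_deriv ?_
        simp only [id]
        field_simp
      have h2 := intervalIntegral.integral_eq_sub_of_hasDerivAt h1
        (Continuous.intervalIntegrable (by fun_prop) _ _)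
      calc ∫ t in a..s, (deriv p t) ^ 2 ≤ ∫ t in a..s, D ^ 2 * rexp ((t - s) / ε) := by
            refine intervalIntegral.integral_mono_on has ((hdc.pow 2).intervalIntegrable _ _)
              (Continuous.intervalIntegrable (by fun_prop) _ _) fun t ht => ?_
            rw [hdL t ht.2, mul_pow]
            have : rexp ((t - s) / ε) ≤ 1 :=
              Real.exp_le_one_iff.2 (div_nonpos_of_nonpos_of_nonneg (by linarith [ht.2]) hε.le)
            have h3 : rexp ((t - s) / ε) ^ 2 ≤ rexp ((t - s) / ε) := by
              nlinarith [Real.exp_pos ((t - s) / ε)]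
            gcongr
        _ ≤ D ^ 2 * ε := by
            rw [h2]
            have : 0 ≤ D ^ 2 * ε * rexp ((a - s) / ε) := by positivity
            simp; linarith
    have e3 : ∫ t in a..s, (V t - m) * (p t) ^ 2 ≤ (∫ t in a..s, (V t - m)) * (q s) ^ 2
        + M * (|D| * ε * (2 * |q s| + |D| * ε)) * (s - a) := by
      calc ∫ t in a..s, (V t - m) * (p t) ^ 2
          ≤ ∫ t in a..s, ((V t - m) * (q s) ^ 2 + M * (|D| * ε * (2 * |q s| + |D| * ε))) := by
            refine intervalIntegral.integral_mono_on has
              (hV.intervalIntegrable_mul ha m has (hpc.pow 2))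
              (((hV.integrableOn_V ha m has).mul_const _).add (by simp)) fun t ht => ?_
            have hd : |p t - q s| ≤ |D| * ε := by
              rw [hpL t ht.2, add_sub_cancel_left, abs_mul, abs_mul, abs_of_pos hε]
              have h1 : rexp ((t - s) / ε) ≤ 1 :=
                Real.exp_le_one_iff.2 (div_nonpos_of_nonpos_of_nonneg (by linarith [ht.2]) hε.le)
              have h2 := Real.exp_pos ((t - s) / ε)
              have : |rexp ((t - s) / ε) - 1| ≤ 1 := abs_le.2 ⟨by linarith, by linarith⟩
              exact mul_le_of_le_one_right (by positivity) this
            have hd2 : |p t + q s| ≤ 2 * |q s| + |D| * ε := by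
              calc |p t + q s| = |(p t - q s) + 2 * q s| := by ring_nf
                _ ≤ |p t - q s| + |2 * q s| := abs_add_le _ _
                _ ≤ _ := by rw [abs_mul, abs_two]; linarith
            have h5 : |(V t - m) * ((p t) ^ 2 - (q s) ^ 2)| ≤
                M * (|D| * ε * (2 * |q s| + |D| * ε)) := by
              have : (p t) ^ 2 - (q s) ^ 2 = (p t - q s) * (p t + q s) := by ring
              rw [this, abs_mul, abs_mul]
              gcongr
              exact hb t ht.1
            have := (abs_le.1 h5).2
            linarith
        _ = _ := by
            rw [intervalIntegral.integral_add ((hV.integrableOn_V ha m has).mul_const _) (by simp),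
              intervalIntegral.integral_mul_const, intervalIntegral.integral_const, smul_eq_mul]
            ring
    rw [e1] at h0
    linarith
  -- let `ε → 0⁺`
  have hlim : Filter.Tendsto (fun ε : ℝ => D ^ 2 * ε +
      ((∫ t in a..s, (V t - m)) * (q s) ^ 2
        + M * (|D| * ε * (2 * |q s| + |D| * ε)) * (s - a)) + formB V m s q)
      (nhdsWithin 0 (Ioi 0))
      (nhds ((∫ t in a..s, (V t - m)) * (q s) ^ 2 + formB V m s q)) := by
    refine Filter.Tendsto.mono_left ?_ nhdsWithin_le_nhds
    refine Continuous.tendsto' (by fun_prop) _ _ (by ring)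
  exact ge_of_tendsto hlim (by filter_upwards [self_mem_nhdsWithin] with ε hε using key ε hε)

/-! ### Coercivity estimates -/

theorem pos_const_of_le {V : ℝ → ℝ} {L m K : ℝ} (hK : 0 < K)
    (h : ∀ q, AdmSL L q → (∫ t in Ioi L, (q t) ^ 2) ≤ K * formB V m L q) :
    ∃ ε, 0 < ε ∧ ∀ q, AdmSL L q → ε * (∫ t in Ioi L, (q t) ^ 2) ≤ formB V m L q := by
  refine ⟨1 / K, by positivity, fun q hq => ?_⟩
  have := h q hq
  rw [one_div, inv_mul_le_iff₀ hK]
  exact this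

/-- A coercivity estimate: if the form on `(s,∞)` dominates `c q(s)²` for all `s ∈ [L,t₁]` and
`V - m ≥ δ` beyond `t₁`, the form on `(L,∞)` dominates a multiple of the `L²` norm.
This is Grönwall's inequality for `G(s) = ∫_L^s q²`. -/
theorem IsPot.coercive_right {V : ℝ → ℝ} (hV : IsPot V) {L t₁ m c δ : ℝ} (hL : -1 < L)
    (hLt : L ≤ t₁) (hc : 0 < c) (hδ : 0 < δ)
    (hcs : ∀ q, AdmSL L q → ∀ s ∈ Icc L t₁, c * (q s) ^ 2 ≤ formB V m s q)
    (hδV : ∀ t, t₁ ≤ t → δ ≤ V t - m) :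
    ∃ ε, 0 < ε ∧ ∀ q, AdmSL L q → ε * (∫ t in Ioi L, (q t) ^ 2) ≤ formB V m L q := by
  obtain ⟨M, hM, hb⟩ := hV.exists_bound hL m
  set K₁ := (rexp (M / c * (t₁ - L)) - 1) / M with hK₁
  have hK₁0 : 0 ≤ K₁ := by
    have : 0 ≤ M / c * (t₁ - L) := mul_nonneg (by positivity) (by linarith)
    have := Real.one_le_exp this
    exact div_nonneg (by linarith) hM.le
  refine pos_const_of_le (K := K₁ + (1 + M * K₁) / δ) (by positivity) fun q hq => ?_
  set F := formB V m L q with hF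
  set G : ℝ → ℝ := fun s => ∫ t in L..s, (q t) ^ 2 with hG
  have hc2 : Continuous fun t => (q t) ^ 2 := hq.cont.pow 2
  have hG0 : ∀ s, L ≤ s → 0 ≤ G s := fun s hs =>
    intervalIntegral.integral_nonneg hs fun _ _ => sq_nonneg _
  have hGd : ∀ s, HasDerivAt G ((q s) ^ 2) s := fun s =>
    intervalIntegral.integral_hasDerivAt_right (hc2.intervalIntegrable _ _)
      (hc2.stronglyMeasurableAtFilter _ _) hc2.continuousAt
  have hFs : ∀ s, L ≤ s → formB V m s q ≤ F + M * G s := by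
    intro s hs
    have h1 := hV.formB_split hL hs m hq
    have h2 := hV.integral_V_lower (m := m) (κ := -M) hL hs
      (fun t ht => (abs_le.1 (hb t ht.1)).1) hc2 fun t => sq_nonneg _
    have h3 : 0 ≤ ∫ t in L..s, (deriv q t) ^ 2 :=
      intervalIntegral.integral_nonneg hs fun _ _ => sq_nonneg _
    simp only [hG]
    linarith
  have hgr := norm_le_gronwallBound_of_norm_deriv_right_le (f := G) (f' := fun s => (q s) ^ 2)
    (δ := 0) (K := M / c) (ε := F / c) (a := L) (b := t₁)
    (fun s _ => (hGd s).continuousAt.continuousWithinAt) (fun s _ => (hGd s).hasDerivWithinAt)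
    (by simp [hG]) (by
      intro s hs
      rw [Real.norm_of_nonneg (sq_nonneg _), Real.norm_of_nonneg (hG0 s hs.1)]
      have h1 := hcs q hq s ⟨hs.1, hs.2.le⟩
      have h2 := hFs s hs.1
      have : M / c * G s + F / c = (F + M * G s) / c := by ring
      rw [this, le_div_iff₀ hc]
      linarith) t₁ ⟨hLt, le_rfl⟩
  rw [Real.norm_of_nonneg (hG0 t₁ hLt), gronwallBound_of_K_ne_0 (by positivity)] at hgr
  have hG1 : G t₁ ≤ K₁ * F := by
    refine hgr.trans (le_of_eq ?_)
    simp only [hK₁]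
    field_simp
    ring
  have hlow := hV.formB_lower (m := m) (a := t₁) (κ := δ) (by linarith) hδV (hq.mono hLt)
  have h0 : 0 ≤ ∫ t in Ioi t₁, (deriv q t) ^ 2 := integral_nonneg fun _ => sq_nonneg _
  have h1 := hFs t₁ hLt
  rw [IsPot.norm_split hLt hq]
  have h2 : ∫ t in Ioi t₁, (q t) ^ 2 ≤ (1 + M * K₁) / δ * F := by
    rw [div_mul_eq_mul_div, le_div_iff₀ hδ]
    nlinarith [mul_le_mul_of_nonneg_left hG1 hM.le]
  have h3 : ∫ t in L..t₁, (q t) ^ 2 ≤ K₁ * F := hG1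
  linarith

/-- `μ(0) > λ(0)`. -/
theorem IsPot.mu_zero {V : ℝ → ℝ} (hV : IsPot V) : V 0 < muV V 0 := by
  obtain ⟨T, hT, hVT⟩ := hV.big
  have h0 : (-1 : ℝ) < 0 := by norm_num
  set δ := V T - V 0 with hδ
  have hδ0 : 0 < δ := by rw [hδ, hV.zero_eq]; linarith
  have hmain : ∃ ε, 0 < ε ∧ ∀ q, AdmSL 0 q →
      ε * (∫ t in Ioi 0, (q t) ^ 2) ≤ formB V (V 0) 0 q := by
    refine pos_const_of_le (K := T * (2 / δ + 2 * (T + 1)) + 1 / δ) (by positivity) fun q hq => ?_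
    set F := formB V (V 0) 0 q with hF
    have hd2 : Continuous fun t => (deriv q t) ^ 2 := hq.contd.pow 2
    have hc2 : Continuous fun t => (q t) ^ 2 := hq.cont.pow 2
    have hJ : ∫ x in (0 : ℝ)..(T + 1), (deriv q x) ^ 2 ≤ ∫ x in Ioi 0, (deriv q x) ^ 2 := by
      rw [intervalIntegral.integral_of_le (by linarith)]
      exact setIntegral_mono_set hq.2.2 (Filter.Eventually.of_forall fun _ => sq_nonneg _)
        (Filter.Eventually.of_forall Ioc_subset_Ioi_self)
    have hI : ∫ x in T..(T + 1), (q x) ^ 2 ≤ ∫ x in Ioi T, (q x) ^ 2 := by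
      rw [intervalIntegral.integral_of_le (by linarith)]
      exact setIntegral_mono_set (hq.mono hT.le).2.1
        (Filter.Eventually.of_forall fun _ => sq_nonneg _)
        (Filter.Eventually.of_forall Ioc_subset_Ioi_self)
    have hJ0 : 0 ≤ ∫ x in Ioi 0, (deriv q x) ^ 2 := integral_nonneg fun _ => sq_nonneg _
    have hN0 : 0 ≤ ∫ x in Ioi T, (q x) ^ 2 := integral_nonneg fun _ => sq_nonneg _
    -- `F ≥ ∫ q'² + δ ∫_T^∞ q²`
    have hFl : (∫ x in Ioi 0, (deriv q x) ^ 2) + δ * ∫ x in Ioi T, (q x) ^ 2 ≤ F := by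
      have h1 := hV.formB_split h0 hT.le (V 0) hq
      have h2 := hV.integral_V_lower (m := V 0) (κ := 0) h0 hT.le
        (fun t ht => sub_nonneg.2 (hV.V0_le (by linarith [ht.1]))) hc2 fun t => sq_nonneg _
      have h3 := hV.formB_lower (m := V 0) (a := T) (κ := δ) (by linarith)
        (fun t ht => by
          have := hV.mono (mem_Ici.2 hT.le) (mem_Ici.2 (hT.le.trans ht)) ht
          linarith) (hq.mono hT.le)
      have h4 := intervalIntegral.integral_interval_add_Ioi hq.2.2 (hq.mono hT.le).2.2
      linarith
    have hpt : ∀ t ∈ Icc 0 T, (q t) ^ 2 ≤ (2 / δ + 2 * (T + 1)) * F := by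
      intro t ht
      have := sq_le_avg (a := 0) (b := T + 1) (c := T) (d := T + 1) hq.1 hT.le (by linarith)
        le_rfl (t := t) ⟨ht.1, by linarith [ht.2]⟩
      have e1 : 2 / δ * F ≥ 2 * ∫ x in Ioi T, (q x) ^ 2 := by
        rw [ge_iff_le, div_mul_eq_mul_div, le_div_iff₀ hδ0]
        linarith
      have e2 : (T + 1) * (∫ x in (0 : ℝ)..(T + 1), (deriv q x) ^ 2) ≤ (T + 1) * F := by
        have : 0 ≤ δ * ∫ x in Ioi T, (q x) ^ 2 := by positivity
        have : ∫ x in (0 : ℝ)..(T + 1), (deriv q x) ^ 2 ≤ F := by linarith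
        gcongr
      have e3 : T + 1 - T = 1 := by ring
      rw [e3, sub_zero, one_mul, mul_one] at this
      linarith
    have hpart : ∫ t in (0 : ℝ)..T, (q t) ^ 2 ≤ T * ((2 / δ + 2 * (T + 1)) * F) := by
      have := intervalIntegral.integral_mono_on hT.le (hc2.intervalIntegrable _ _)
        (_root_.intervalIntegrable_const (μ := volume)) hpt
      rwa [intervalIntegral.integral_const, smul_eq_mul, sub_zero] at this
    rw [IsPot.norm_split hT.le hq]
    have e1 : ∫ x in Ioi T, (q x) ^ 2 ≤ 1 / δ * F := by
      rw [div_mul_eq_mul_div, le_div_iff₀ hδ0]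
      linarith
    linarith
  obtain ⟨ε, hε, h⟩ := hmain
  exact hV.lt_muV h0 hε h

/-- If `μ > λ` at `L₁ ≤ 0`, then `μ ≥ λ` slightly to the left of `L₁`. -/
theorem IsPot.exists_left {V : ℝ → ℝ} (hV : IsPot V) {L₁ : ℝ} (h1 : -1 < L₁) (h2 : L₁ ≤ 0)
    (h : V L₁ < muV V L₁) : ∃ L, -1 < L ∧ L < L₁ ∧ V L ≤ muV V L := by
  set m₀ := V L₁ with hm₀
  have hm₀0 : 0 ≤ m₀ := hV.nonneg h1
  set η := (muV V L₁ - m₀) / 3 with hη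
  have hη0 : 0 < η := by rw [hη]; linarith
  have hmu : muV V L₁ = m₀ + 3 * η := by rw [hη]; ring
  set θ := η / (m₀ + 3 * η) with hθ
  have hθ0 : 0 < θ := by positivity
  have hθ1 : θ * (m₀ + 3 * η) = η := by rw [hθ]; field_simp
  have hθ2 : θ ≤ 1 := by
    rw [hθ, div_le_one (by positivity)]; linarith
  set κ := min η θ / 2 with hκ
  have hκ0 : 0 < κ := by have := lt_min hη0 hθ0; positivity
  -- The trace at `L₁` is controlled by the spectral gap.
  have htrace : ∀ q, AdmSL L₁ q → κ * (q L₁) ^ 2 ≤ formB V (m₀ + η) L₁ q := by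
    intro q hq
    have hmq := hV.muV_mul_le h1 hq
    have hN0 : 0 ≤ ∫ x in Ioi L₁, (q x) ^ 2 := integral_nonneg fun _ => sq_nonneg _
    have hJ0 : 0 ≤ ∫ x in Ioi L₁, (deriv q x) ^ 2 := integral_nonneg fun _ => sq_nonneg _
    have hJ : ∫ x in L₁..(L₁ + 1), (deriv q x) ^ 2 ≤ ∫ x in Ioi L₁, (deriv q x) ^ 2 := by
      rw [intervalIntegral.integral_of_le (by linarith)]
      exact setIntegral_mono_set hq.2.2 (Filter.Eventually.of_forall fun _ => sq_nonneg _)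
        (Filter.Eventually.of_forall Ioc_subset_Ioi_self)
    have hI : ∫ x in L₁..(L₁ + 1), (q x) ^ 2 ≤ ∫ x in Ioi L₁, (q x) ^ 2 := by
      rw [intervalIntegral.integral_of_le (by linarith)]
      exact setIntegral_mono_set hq.2.1 (Filter.Eventually.of_forall fun _ => sq_nonneg _)
        (Filter.Eventually.of_forall Ioc_subset_Ioi_self)
    have hsob := sq_le_avg (a := L₁) (b := L₁ + 1) (c := L₁) (d := L₁ + 1) hq.1 le_rfl
      (by linarith) le_rfl (t := L₁) ⟨le_rfl, by linarith⟩
    have e3 : L₁ + 1 - L₁ = 1 := by ring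
    rw [e3] at hsob
    have hlow := hV.formB_lower (m := 0) (κ := 0) h1
      (fun t ht => by rw [sub_zero]; exact hV.nonneg (by linarith)) hq
    rw [hV.formB_eq h1 0 hq] at hlow
    rw [hV.formB_eq h1 _ hq]
    rw [hmu] at hmq
    set E := ∫ t in Ioi L₁, ((deriv q t) ^ 2 + V t * (q t) ^ 2)
    set N := ∫ t in Ioi L₁, (q t) ^ 2
    set J := ∫ t in Ioi L₁, (deriv q t) ^ 2
    have hEJ : J ≤ E := by linarith
    have a1 : θ * J ≤ θ * E := by gcongr
    have a2 : (1 - θ) * ((m₀ + 3 * η) * N) ≤ (1 - θ) * E :=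
      mul_le_mul_of_nonneg_left hmq (by linarith)
    have a3 : (1 - θ) * ((m₀ + 3 * η) * N) = (m₀ + 2 * η) * N := by
      linear_combination (-N) * hθ1
    have a4 : κ * (q L₁) ^ 2 ≤ κ * (2 * N + 2 * J) := by
      gcongr; linarith
    have a5 : κ * (2 * N) ≤ η * N := by
      have : 2 * κ ≤ η := by rw [hκ]; linarith [min_le_left η θ]
      nlinarith
    have a6 : κ * (2 * J) ≤ θ * J := by
      have : 2 * κ ≤ θ := by rw [hκ]; linarith [min_le_right η θ]
      nlinarith
    linarith
  -- choose `L` so close to `L₁` that `V L ≤ m₀ + η` and `L₁ - L` is small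
  have hcont : ContinuousAt (fun t : ℝ => π ^ 2 / (2 * (1 + t) ^ 2)) L₁ := by
    have : 2 * (1 + L₁) ^ 2 ≠ 0 := by
      have : 0 < 1 + L₁ := by linarith
      positivity
    fun_prop (disch := assumption)
  have hev : ∀ᶠ t in nhdsWithin L₁ (Iio L₁), π ^ 2 / (2 * (1 + t) ^ 2) < m₀ + η := by
    refine (hcont.eventually_lt_const ?_).filter_mono nhdsWithin_le_nhds
    change π ^ 2 / (2 * (1 + L₁) ^ 2) < _
    rw [← hV.left L₁ h1 h2]; linarith
  set h₀ := min 1 (min (1 / (2 * η)) (κ / (2 * η))) with hh₀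
  have hh₀0 : 0 < h₀ := by rw [hh₀]; positivity
  have hev2 : ∀ᶠ t in nhdsWithin L₁ (Iio L₁), max (-1) (L₁ - h₀) < t := by
    refine (eventually_gt_nhds ?_).filter_mono nhdsWithin_le_nhds
    exact max_lt h1 (by linarith)
  obtain ⟨L, ⟨hL1, hL2⟩, hL3⟩ := ((hev.and hev2).and self_mem_nhdsWithin).exists
  replace hL3 : L < L₁ := hL3
  have hLm : -1 < L := (le_max_left _ _).trans_lt hL2
  have hLh : L₁ - h₀ < L := (le_max_right _ _).trans_lt hL2
  refine ⟨L, hLm, hL3, hV.le_muV hLm fun q hq => ?_⟩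
  rw [← hV.left L hLm (by linarith)] at hL1
  rw [hV.formB_split hLm hL3.le _ hq]
  set ℓ := L₁ - L with hℓ
  have hℓ0 : 0 < ℓ := by rw [hℓ]; linarith
  have hℓ1 : ℓ ≤ h₀ := by rw [hℓ]; linarith
  set J := ∫ t in L..L₁, (deriv q t) ^ 2 with hJ
  have hJ0 : 0 ≤ J := intervalIntegral.integral_nonneg hL3.le fun _ _ => sq_nonneg _
  have hc2 : Continuous fun t => (q t) ^ 2 := hq.cont.pow 2
  have hpot := hV.integral_V_lower (m := V L) (κ := -η) hLm hL3.le
    (fun t ht => by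
      have : m₀ ≤ V t := by
        rcases ht.2.eq_or_lt with h | h
        · rw [h]
        · exact (hV.anti (by linarith [ht.1]) h h2).le
      linarith) hc2 fun t => sq_nonneg _
  have hG : ∫ t in L..L₁, (q t) ^ 2 ≤ ℓ * (2 * (q L₁) ^ 2 + 2 * ℓ * J) := by
    have := intervalIntegral.integral_mono_on hL3.le (hc2.intervalIntegrable L L₁)
      (_root_.intervalIntegrable_const (μ := volume))
      (fun t ht => sq_le_of_mem (a := L) (b := L₁) (s := L₁) hq.1 ⟨hL3.le, le_rfl⟩ ht)
    rwa [intervalIntegral.integral_const, smul_eq_mul] at this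
  have htr := htrace q (hq.mono hL3.le)
  have hshift : formB V (m₀ + η) L₁ q ≤ formB V (V L) L₁ q := by
    rw [hV.formB_eq h1 _ (hq.mono hL3.le), hV.formB_eq h1 _ (hq.mono hL3.le)]
    have hN0 : 0 ≤ ∫ x in Ioi L₁, (q x) ^ 2 := integral_nonneg fun _ => sq_nonneg _
    nlinarith
  have hηℓ1 : 2 * η * ℓ ≤ 1 := by
    have : ℓ ≤ 1 / (2 * η) := hℓ1.trans ((min_le_right _ _).trans (min_le_left _ _))
    rw [le_div_iff₀ (by positivity)] at this
    linarith
  have hηℓ2 : 2 * η * ℓ ≤ κ := by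
    have : ℓ ≤ κ / (2 * η) := hℓ1.trans ((min_le_right _ _).trans (min_le_right _ _))
    rw [le_div_iff₀ (by positivity)] at this
    linarith
  have hℓ2 : ℓ ≤ 1 := hℓ1.trans (min_le_left _ _)
  have b1 : η * (∫ t in L..L₁, (q t) ^ 2) ≤ η * (ℓ * (2 * (q L₁) ^ 2 + 2 * ℓ * J)) := by gcongr
  have b2 : 2 * η * ℓ * (q L₁) ^ 2 ≤ κ * (q L₁) ^ 2 := by gcongr
  have b3 : 2 * η * ℓ * (ℓ * J) ≤ 1 * (1 * J) := by gcongr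
  nlinarith

/-! ### The crossing point and strict minimality -/

namespace IsPot
variable {V : ℝ → ℝ}

/-- If `λ(L) ≤ μ(L)` then `λ(L) ≤ μ(s)` for `L ≤ s ≤ 0`, because `λ` decreases on `(-1,0]`. -/
theorem le_mu_of_le (hV : IsPot V) {L s : ℝ} (hL : -1 < L) (hLs : L ≤ s) (hs : s ≤ 0)
    (h : V L ≤ muV V L) : V L ≤ muV V s := by
  refine hV.le_muV (by linarith) fun q hq => ?_
  have h1 := hV.ext_const hL hLs (m := V L) (fun p hp => hV.formB_nonneg hL h hp) hq
  have h2 : ∫ t in L..s, (V t - V L) ≤ 0 := by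
    rw [intervalIntegral.integral_of_le hLs]
    refine setIntegral_nonpos measurableSet_Ioc fun t ht => ?_
    linarith [hV.anti hL ht.1 (ht.2.trans hs)]
  nlinarith [mul_nonneg (neg_nonneg.2 h2) (sq_nonneg (q s))]

theorem continuousAt_explicit {a : ℝ} (ha : -1 < a) :
    ContinuousAt (fun t : ℝ => π ^ 2 / (2 * (1 + t) ^ 2)) a := by
  have : 2 * (1 + a) ^ 2 ≠ 0 := by
    have : 0 < 1 + a := by linarith
    positivity
  fun_prop (disch := assumption)

/-- The curves `μ` and `λ` meet somewhere in `(-1,0)`: at the infimum of `{L < 0 : λ(L) ≤ μ(L)}`. -/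
theorem exists_crossing (hV : IsPot V) : ∃ a, -1 < a ∧ a < 0 ∧ muV V a = V a := by
  set S : Set ℝ := {L | -1 < L ∧ L < 0 ∧ V L ≤ muV V L} with hS
  have hne : S.Nonempty := by
    obtain ⟨L, h1, h2, h3⟩ := hV.exists_left (by norm_num) le_rfl hV.mu_zero
    exact ⟨L, h1, h2, h3⟩
  set K := muV V 0 with hK
  have hK0 : 0 < K := by
    have := hV.mu_zero
    rw [hV.zero_eq] at this
    have h2 : 0 < π ^ 2 / 2 := by positivity
    linarith
  have hlb : ∀ L ∈ S, -1 + π ^ 2 / (2 * K) ≤ L := by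
    rintro L ⟨h1, h2, h3⟩
    have h4 : V L ≤ K := hV.le_mu_of_le h1 h2.le le_rfl h3
    rw [hV.left L h1 h2.le, div_le_iff₀ (by have : 0 < 1 + L := by linarith
                                            positivity)] at h4
    have h5 : π ^ 2 / (2 * K) ≤ (1 + L) ^ 2 := by
      rw [div_le_iff₀ (by positivity)]; linarith
    nlinarith
  have hbdd : BddBelow S := ⟨_, hlb⟩
  set a := sInf S with ha
  have ha1 : -1 < a := by
    have := le_csInf hne hlb
    have h2 : 0 < π ^ 2 / (2 * K) := by positivity
    linarith
  have ha0 : a < 0 := by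
    obtain ⟨L, hL⟩ := hne
    exact (csInf_le hbdd hL).trans_lt hL.2.1
  refine ⟨a, ha1, ha0, le_antisymm ?_ ?_⟩
  · by_contra! hlt
    obtain ⟨L, h1, h2, h3⟩ := hV.exists_left ha1 ha0.le hlt
    exact absurd (csInf_le hbdd ⟨h1, h2.trans ha0, h3⟩) (not_le.2 h2)
  · refine hV.le_muV ha1 fun q hq => ?_
    set N := ∫ t in Ioi a, (q t) ^ 2 with hN
    have hc2 : Continuous fun t => (q t) ^ 2 := hq.cont.pow 2
    have key : ∀ s, a < s → s < 0 → 0 ≤ formB V (V a) a q + (V a - V s) * N := by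
      intro s has hs0
      obtain ⟨L, hLS, hLs⟩ := exists_lt_of_csInf_lt hne has
      have hs1 : V s ≤ muV V s :=
        (hV.anti hLS.1 hLs hs0.le).le.trans (hV.le_mu_of_le hLS.1 hLs.le hs0.le hLS.2.2)
      have hqs := hq.mono has.le
      have h1 := hV.formB_nonneg (by linarith) hs1 hqs
      have h2 := hV.formB_split ha1 has.le (V a) hq
      have h3 := hV.integral_V_lower (m := V a) (κ := V s - V a) ha1 has.le (fun t ht => by
        rcases ht.2.eq_or_lt with h | h
        · rw [h]
        · linarith [hV.anti (by linarith [ht.1]) h hs0.le]) hc2 fun t => sq_nonneg _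
      have h4 : 0 ≤ ∫ t in a..s, (deriv q t) ^ 2 :=
        intervalIntegral.integral_nonneg has.le fun _ _ => sq_nonneg _
      rw [hV.formB_eq (by linarith) _ hqs] at h1 h2
      have h5 := IsPot.norm_split has.le hq
      rw [hN, h5]
      nlinarith
    have hlim : Filter.Tendsto (fun s : ℝ => formB V (V a) a q +
        (V a - π ^ 2 / (2 * (1 + s) ^ 2)) * N) (nhdsWithin a (Ioi a))
        (nhds (formB V (V a) a q + (V a - π ^ 2 / (2 * (1 + a) ^ 2)) * N)) := by
      refine Filter.Tendsto.mono_left ?_ nhdsWithin_le_nhds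
      exact ((tendsto_const_nhds.sub (continuousAt_explicit ha1)).mul_const N).const_add _
    rw [← hV.left a ha1 ha0.le, sub_self, zero_mul, add_zero] at hlim
    refine ge_of_tendsto hlim ?_
    have hev : ∀ᶠ s in nhdsWithin a (Ioi a), s < 0 :=
      (eventually_lt_nhds ha0).filter_mono nhdsWithin_le_nhds
    filter_upwards [self_mem_nhdsWithin, hev] with s h1 h2
    rw [← hV.left s (ha1.trans h1) h2.le]
    exact key s h1 h2

/-- The potential eventually exceeds the value `m` at the crossing: otherwise `V ≤ m` on all of
`(a,∞)`, and `exp(-εt)` would have energy below `m`. -/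
theorem exists_gt (hV : IsPot V) {a : ℝ} (ha1 : -1 < a) (ha0 : a < 0)
    (hmu : V a ≤ muV V a) : ∃ T, 0 ≤ T ∧ V a < V T := by
  by_contra! hcon
  set m := V a with hm
  set c := -∫ t in a..0, (V t - m) with hc
  have hVi := hV.integrableOn_V ha1 m ha0.le
  have hc0 : 0 < c := by
    rw [hc, ← intervalIntegral.integral_neg]
    refine intervalIntegral.intervalIntegral_pos_of_pos_on hVi.neg (fun t ht => ?_) ha0
    linarith [hV.anti ha1 ht.1 ht.2.le]
  set ε := min (1 / 2) (c / 6) with hε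
  have hε0 : 0 < ε := by rw [hε]; positivity
  set q : ℝ → ℝ := fun t => rexp (-ε * t) with hq
  have hadm := admSL_exp hε0 a
  have h0 := hV.formB_nonneg ha1 hmu hadm
  have h2e : ∀ t : ℝ, rexp (-ε * t) ^ 2 = rexp (-(2 * ε) * t) := by
    intro t; rw [← Real.exp_nat_mul]; congr 1; push_cast; ring
  have hder : ∀ t, deriv (fun t : ℝ => rexp (-ε * t)) t ^ 2 = ε ^ 2 * rexp (-(2 * ε) * t) := by
    intro t; rw [deriv_exp_neg_mul]; simp only []; rw [mul_pow, h2e]; ring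
  have e1 : formB V m a q = (∫ t in Ioi a, (deriv q t) ^ 2) +
      ∫ t in Ioi a, (V t - m) * (q t) ^ 2 :=
    integral_add hadm.2.2 (hV.integrableOn_V_mul ha1 m hadm.2.1)
  have e2 : ∫ t in Ioi a, (deriv q t) ^ 2 = ε ^ 2 * (rexp (-(2 * ε) * a) / (2 * ε)) := by
    simp only [hq, hder]
    rw [integral_const_mul, integral_exp_mul_Ioi (by linarith), neg_div_neg_eq]
  have hq1 : ∀ t, t ≤ 0 → 1 ≤ (q t) ^ 2 := by
    intro t ht
    rw [hq]; simp only []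
    rw [h2e]
    exact Real.one_le_exp (by nlinarith)
  have e3 : ∫ t in Ioi a, (V t - m) * (q t) ^ 2 ≤ ∫ t in a..0, (V t - m) := by
    rw [← intervalIntegral.integral_interval_add_Ioi (hV.integrableOn_V_mul ha1 m hadm.2.1)
      (hV.integrableOn_V_mul (by norm_num) m (hadm.mono ha0.le).2.1)]
    have h1 : ∫ t in Ioi 0, (V t - m) * (q t) ^ 2 ≤ 0 :=
      setIntegral_nonpos measurableSet_Ioi fun t ht =>
        mul_nonpos_of_nonpos_of_nonneg (by linarith [hcon t (le_of_lt ht)]) (sq_nonneg _)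
    have h2 : ∫ t in a..0, (V t - m) * (q t) ^ 2 ≤ ∫ t in a..0, (V t - m) := by
      refine intervalIntegral.integral_mono_on ha0.le
        (hV.intervalIntegrable_mul ha1 m ha0.le (hadm.cont.pow 2)) hVi fun t ht => ?_
      have h3 : V t - m ≤ 0 := by
        rcases ht.1.eq_or_lt with h | h
        · rw [← h, hm, sub_self]
        · linarith [hV.anti ha1 h ht.2]
      nlinarith [hq1 t ht.2]
    linarith
  have e4 : ε ^ 2 * (rexp (-(2 * ε) * a) / (2 * ε)) < c := by
    have h1 : rexp (-(2 * ε) * a) ≤ rexp 1 := by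
      apply Real.exp_le_exp.2
      have : ε ≤ 1 / 2 := min_le_left _ _
      nlinarith
    have h2 : rexp 1 < 3 := Real.exp_one_lt_three
    have h3 : ε ≤ c / 6 := min_le_right _ _
    have : ε ^ 2 * (rexp (-(2 * ε) * a) / (2 * ε)) = ε * rexp (-(2 * ε) * a) / 2 := by
      field_simp
    rw [this]
    nlinarith
  change 0 ≤ formB V m a q at h0
  rw [e1, e2] at h0
  linarith

/-- Coercivity of the form at level `m = λ(a) ≤ μ(a)` to the right of the crossing point `a`.
For `s ≤ t₁` the form on `(s,∞)` dominates `q(s)² ∫_a^s (m - λ)` by `ext_const`; beyond `t₁` the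
potential is above `m`. -/
theorem strict_right (hV : IsPot V) {a : ℝ} (ha1 : -1 < a) (ha0 : a < 0)
    (hmu : V a ≤ muV V a) {L : ℝ} (hL : a < L) :
    ∃ ε, 0 < ε ∧ ∀ q, AdmSL L q → ε * (∫ t in Ioi L, (q t) ^ 2) ≤ formB V (V a) L q := by
  set m := V a with hm
  obtain ⟨M, hM, hb⟩ := hV.exists_bound ha1 m
  set C : ℝ → ℝ := fun s => -∫ t in a..s, (V t - m) with hC
  have hVi : ∀ {s t}, a ≤ s → s ≤ t → IntervalIntegrable (fun t => V t - m) volume s t :=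
    fun hs hst => hV.integrableOn_V (by linarith) m hst
  have hadd : ∀ {s t}, a ≤ s → s ≤ t → C t = C s - ∫ x in s..t, (V x - m) := by
    intro s t hs hst
    simp only [hC]
    rw [← intervalIntegral.integral_add_adjacent_intervals (hVi le_rfl hs) (hVi hs hst)]
    ring
  have hCpos : ∀ s, a < s → s ≤ 0 → 0 < C s := by
    intro s h1 h2
    simp only [hC]
    rw [← intervalIntegral.integral_neg]
    refine intervalIntegral.intervalIntegral_pos_of_pos_on (hVi le_rfl h1.le).neg
      (fun t ht => ?_) h1
    linarith [hV.anti ha1 ht.1 (ht.2.le.trans h2)]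
  have hCmono : ∀ s t, a ≤ s → s ≤ t → t ≤ 0 → C s ≤ C t := by
    intro s t h1 h2 h3
    rw [hadd h1 h2]
    have : ∫ x in s..t, (V x - m) ≤ 0 := by
      rw [intervalIntegral.integral_of_le h2]
      refine setIntegral_nonpos measurableSet_Ioc fun x hx => ?_
      linarith [hV.anti ha1 (h1.trans_lt hx.1) (hx.2.trans h3)]
    linarith
  -- `t₀` is where `V` crosses `m` on `[0,∞)`; `t₁` lies slightly beyond it.
  set U : Set ℝ := {t | 0 ≤ t ∧ m < V t} with hU
  have hUne : U.Nonempty := hV.exists_gt ha1 ha0 hmu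
  have hUb : BddBelow U := ⟨0, fun t ht => ht.1⟩
  set t₀ := sInf U with ht₀
  have ht₀0 : 0 ≤ t₀ := le_csInf hUne fun t ht => ht.1
  have hC0 : 0 < C 0 := hCpos 0 ha0 le_rfl
  obtain ⟨t₁, ht₁U, ht₁⟩ := exists_lt_of_csInf_lt hUne
    (show sInf U < t₀ + C 0 / (2 * M) by
      have : 0 < C 0 / (2 * M) := by positivity
      linarith)
  have ht₀₁ : t₀ ≤ t₁ := csInf_le hUb ht₁U
  have hbefore : ∀ t, 0 ≤ t → t < t₀ → V t ≤ m := by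
    intro t h1 h2
    by_contra! h3
    exact absurd (csInf_le hUb ⟨h1, h3⟩) (not_le.2 h2)
  have hCt₀ : ∀ s, 0 ≤ s → s ≤ t₀ → C 0 ≤ C s := by
    intro s h1 h2
    rw [hadd ha0.le h1]
    have : ∫ x in (0 : ℝ)..s, (V x - m) ≤ 0 := by
      rw [intervalIntegral.integral_of_le h1, integral_Ioc_eq_integral_Ioo]
      refine setIntegral_nonpos measurableSet_Ioo fun x hx => ?_
      linarith [hbefore x hx.1.le (hx.2.trans_le h2)]
    linarith
  have hChalf : ∀ s, 0 ≤ s → s ≤ t₁ → C 0 / 2 ≤ C s := by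
    intro s h1 h2
    rcases le_or_gt s t₀ with h | h
    · linarith [hCt₀ s h1 h]
    · rw [hadd (ha0.le.trans ht₀0) h.le]
      have h3 := hCt₀ t₀ ht₀0 le_rfl
      have h4 : ∫ x in t₀..s, (V x - m) ≤ ∫ _ in t₀..s, M :=
        intervalIntegral.integral_mono_on h.le (hVi (ha0.le.trans ht₀0) h.le)
          (_root_.intervalIntegrable_const (μ := volume))
          fun x hx => (abs_le.1 (hb x (by linarith [hx.1]))).2
      rw [intervalIntegral.integral_const, smul_eq_mul] at h4
      have h5 : (s - t₀) * M ≤ C 0 / 2 := by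
        have : s - t₀ ≤ C 0 / (2 * M) := by linarith
        rw [le_div_iff₀ (by positivity)] at this
        linarith
      linarith
  set δ := V t₁ - m with hδ
  have hδ0 : 0 < δ := by have := ht₁U.2; linarith
  have hδV : ∀ t, t₁ ≤ t → δ ≤ V t - m := fun t ht => by
    have := hV.mono (mem_Ici.2 ht₁U.1) (mem_Ici.2 (ht₁U.1.trans ht)) ht
    linarith
  rcases le_or_gt t₁ L with h | h
  · refine ⟨δ, hδ0, fun q hq => ?_⟩
    have h1 := hV.formB_lower (m := m) (κ := δ) (by linarith) (fun t ht => hδV t (h.trans ht)) hq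
    have h2 : 0 ≤ ∫ t in Ioi L, (deriv q t) ^ 2 := integral_nonneg fun _ => sq_nonneg _
    linarith
  · have hL' : a < min L 0 := lt_min hL ha0
    refine hV.coercive_right (c := min (C (min L 0)) (C 0 / 2)) (by linarith) h.le
      (lt_min (hCpos _ hL' (min_le_right _ _)) (by linarith)) hδ0 ?_ hδV
    intro q hq s hs
    have h1 := hV.ext_const ha1 (by linarith [hs.1] : a ≤ s) (m := m)
      (fun p hp => hV.formB_nonneg ha1 hmu hp) (hq.mono hs.1)
    have h2 : min (C (min L 0)) (C 0 / 2) ≤ C s := by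
      rcases le_or_gt s 0 with h3 | h3
      · exact (min_le_left _ _).trans
          (hCmono _ _ hL'.le ((min_le_left _ _).trans hs.1) h3)
      · exact (min_le_right _ _).trans (hChalf s h3.le hs.2)
    have h3 := mul_le_mul_of_nonneg_right h2 (sq_nonneg (q s))
    simp only [hC] at h3
    linarith

/-- Coercivity of the form at level `m = λ(a) ≤ μ(a)` to the left of the crossing point `a`.
The potential is above `m` on `(L,a)`, and `strict_right` controls the part beyond `a + h`. -/
theorem strict_left (hV : IsPot V) {a : ℝ} (ha1 : -1 < a) (ha0 : a < 0)
    (hmu : V a ≤ muV V a) {L : ℝ} (hL1 : -1 < L) (hL : L < a) :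
    ∃ ε, 0 < ε ∧ ∀ q, AdmSL L q → ε * (∫ t in Ioi L, (q t) ^ 2) ≤ formB V (V a) L q := by
  set m := V a with hm
  obtain ⟨M, hM, hb⟩ := hV.exists_bound hL1 m
  set w := (a - L) / 2 with hw
  have hw0 : 0 < w := by rw [hw]; linarith
  set mid := L + w with hmid
  have hmida : mid < a := by rw [hmid, hw]; linarith
  have hLmid : L < mid := by linarith
  set η := V mid - m with hη
  have hη0 : 0 < η := by
    have := hV.anti (by linarith) hmida ha0.le
    linarith
  set ℓ := a - L + 1 with hℓ
  have hℓ0 : 0 < ℓ := by linarith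
  set h := min 1 (min (η * w / (4 * M)) (1 / (4 * M * ℓ))) with hh
  have hh0 : 0 < h := by rw [hh]; positivity
  have hh1 : h ≤ 1 := min_le_left _ _
  have hh2 : M * h * (2 / w) ≤ η / 2 := by
    have : h ≤ η * w / (4 * M) := (min_le_right _ _).trans (min_le_left _ _)
    rw [le_div_iff₀ (by positivity)] at this
    rw [mul_div_assoc', div_le_iff₀ hw0]
    linarith
  have hh3 : M * h * (2 * ℓ) ≤ 1 / 2 := by
    have : h ≤ 1 / (4 * M * ℓ) := (min_le_right _ _).trans (min_le_right _ _)
    rw [le_div_iff₀ (by positivity)] at this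
    linarith
  obtain ⟨ε, hε, hP⟩ := hV.strict_right ha1 ha0 hmu (L := a + h) (by linarith)
  refine pos_const_of_le (K := ℓ / (M * h) + 1 / ε) (by positivity) fun q hq => ?_
  set F := formB V m L q with hF
  have hc2 : Continuous fun t => (q t) ^ 2 := hq.cont.pow 2
  have hd2 : Continuous fun t => (deriv q t) ^ 2 := hq.contd.pow 2
  have hLh : L ≤ a + h := by linarith
  set J := ∫ t in L..(a + h), (deriv q t) ^ 2 with hJ
  set I := ∫ t in L..mid, (q t) ^ 2 with hI
  have hJ0 : 0 ≤ J := intervalIntegral.integral_nonneg hLh fun _ _ => sq_nonneg _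
  have hI0 : 0 ≤ I := intervalIntegral.integral_nonneg hLmid.le fun _ _ => sq_nonneg _
  set X := (2 / w) * I + 2 * ℓ * J with hX
  have hpt : ∀ t ∈ Icc L (a + h), (q t) ^ 2 ≤ X := by
    intro t ht
    have h1 := sq_le_avg (a := L) (b := a + h) (c := L) (d := mid) hq.1 le_rfl hLmid.le
      (by linarith) ht
    have e : mid - L = w := by rw [hmid]; ring
    rw [e] at h1
    have h2 : 2 * w * (a + h - L) * J ≤ 2 * w * ℓ * J := by gcongr; linarith
    have h3 : w * X = 2 * I + 2 * w * ℓ * J := by rw [hX]; field_simp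
    refine le_of_mul_le_mul_left ?_ hw0
    rw [h3]
    linarith
  have hbd : ∀ x y, L ≤ x → x ≤ y → y ≤ a + h → ∫ t in x..y, (q t) ^ 2 ≤ (y - x) * X := by
    intro x y h1 h2 h3
    have := intervalIntegral.integral_mono_on h2 (hc2.intervalIntegrable x y)
      (_root_.intervalIntegrable_const (μ := volume))
      (fun t ht => hpt t ⟨h1.trans ht.1, ht.2.trans h3⟩)
    rwa [intervalIntegral.integral_const, smul_eq_mul] at this
  -- `F = ∫_L^{a+h} q'² + ∫_L^{mid} (V-m)q² + ∫_{mid}^a (V-m)q² + ∫_a^{a+h} (V-m)q² + (tail)`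
  have s1 := hV.formB_split hL1 hLh m hq
  have s2 : ∫ t in L..(a + h), (V t - m) * (q t) ^ 2 = (∫ t in L..mid, (V t - m) * (q t) ^ 2) +
      (∫ t in mid..a, (V t - m) * (q t) ^ 2) + ∫ t in a..(a + h), (V t - m) * (q t) ^ 2 := by
    rw [intervalIntegral.integral_add_adjacent_intervals
        (hV.intervalIntegrable_mul hL1 m hLmid.le hc2)
        (hV.intervalIntegrable_mul (by linarith) m hmida.le hc2),
      intervalIntegral.integral_add_adjacent_intervals
        (hV.intervalIntegrable_mul hL1 m hL.le hc2)
        (hV.intervalIntegrable_mul ha1 m (by linarith) hc2)]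
  have s3 := hV.integral_V_lower (m := m) (κ := η) hL1 hLmid.le (fun t ht => by
    rcases ht.2.eq_or_lt with h' | h'
    · rw [h']
    · linarith [hV.anti (by linarith [ht.1]) h' (by linarith : mid ≤ 0)]) hc2 fun t => sq_nonneg _
  have s4 := hV.integral_V_lower (m := m) (κ := 0) (by linarith) hmida.le (fun t ht => by
    rcases ht.2.eq_or_lt with h' | h'
    · rw [h', hm, sub_self]
    · linarith [hV.anti (by linarith [ht.1]) h' ha0.le]) hc2 fun t => sq_nonneg _
  have s5 := hV.integral_V_lower (m := m) (κ := -M) ha1 (by linarith : a ≤ a + h)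
    (fun t ht => (abs_le.1 (hb t (by linarith [ht.1]))).1) hc2 fun t => sq_nonneg _
  have s6 := hbd a (a + h) hL.le (by linarith) le_rfl
  have s7 := hbd L (a + h) le_rfl hLh le_rfl
  have s8 := hP q (hq.mono hLh)
  have hX0 : 0 ≤ X := by rw [hX]; positivity
  have hMX : M * h * X ≤ (J + η * I) / 2 := by
    have t1 := mul_le_mul_of_nonneg_right hh2 hI0
    have t2 := mul_le_mul_of_nonneg_right hh3 hJ0
    rw [hX]
    linarith
  have s9 : M * (∫ t in a..(a + h), (q t) ^ 2) ≤ M * ((a + h - a) * X) := by gcongr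
  have hN0 : 0 ≤ ∫ t in Ioi (a + h), (q t) ^ 2 := integral_nonneg fun _ => sq_nonneg _
  have hεN : 0 ≤ ε * ∫ t in Ioi (a + h), (q t) ^ 2 := by positivity
  have hmain : (J + η * I) / 2 + ε * (∫ t in Ioi (a + h), (q t) ^ 2) ≤ F := by
    have : M * ((a + h - a) * X) = M * h * X := by ring
    linarith
  rw [IsPot.norm_split hLh hq]
  have f1 : ∫ t in Ioi (a + h), (q t) ^ 2 ≤ 1 / ε * F := by
    have : 0 ≤ η * I := by positivity
    rw [div_mul_eq_mul_div, le_div_iff₀ hε]; linarith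
  have f2 : ∫ t in L..(a + h), (q t) ^ 2 ≤ ℓ / (M * h) * F := by
    rw [div_mul_eq_mul_div, le_div_iff₀ (by positivity)]
    have g1 : (a + h - L) * X ≤ ℓ * X := by gcongr; linarith
    have g2 : (∫ t in L..(a + h), (q t) ^ 2) * (M * h) ≤ ℓ * X * (M * h) := by
      gcongr; linarith
    have g3 : ℓ * (M * h * X) ≤ ℓ * F := by gcongr; linarith
    linarith
  linarith

/-- The crossing point of `μ` and `λ` is the strict global minimizer of `μ`. -/
theorem unique_minimizer (hV : IsPot V) : ∃ a, -1 < a ∧ a < 0 ∧ muV V a = V a ∧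
    ∀ L, -1 < L → L ≠ a → muV V a < muV V L := by
  obtain ⟨a, h1, h2, h3⟩ := hV.exists_crossing
  refine ⟨a, h1, h2, h3, fun L hL hne => ?_⟩
  rw [h3]
  rcases lt_or_gt_of_ne hne with h | h
  · obtain ⟨ε, hε, hq⟩ := hV.strict_left h1 h2 h3.ge hL h
    exact hV.lt_muV hL hε hq
  · obtain ⟨ε, hε, hq⟩ := hV.strict_right h1 h2 h3.ge h
    exact hV.lt_muV hL hε hq

end IsPot

/-! ### Geometry of the finite guide -/

theorem isOpen_Gam : IsOpen Gam := by
  have hc : Continuous fun p : ℝ × ℝ => min p.1 p.2 := by fun_prop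
  exact (isOpen_lt continuous_const hc).inter (isOpen_lt hc continuous_const)

theorem isOpen_Box (L : ℝ) : IsOpen (Box L) := by
  have h1 : Continuous fun p : ℝ × ℝ => |p.1 + 1| := by fun_prop
  have h2 : Continuous fun p : ℝ × ℝ => |p.2 + 1| := by fun_prop
  exact (isOpen_lt h1 continuous_const).inter (isOpen_lt h2 continuous_const)

theorem isOpen_GamR (R : ℝ) : IsOpen (GamR R) := isOpen_Gam.inter (isOpen_Box _)

theorem closure_Gam_sub {p : ℝ × ℝ} (hp : p ∈ closure Gam) :
    -1 ≤ min p.1 p.2 ∧ min p.1 p.2 ≤ 0 := by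
  have hm : Continuous fun p : ℝ × ℝ => min p.1 p.2 := by fun_prop
  have hc : IsClosed {p : ℝ × ℝ | -1 ≤ min p.1 p.2 ∧ min p.1 p.2 ≤ 0} :=
    (isClosed_le continuous_const hm).inter (isClosed_le hm continuous_const)
  have hs : Gam ⊆ {p : ℝ × ℝ | -1 ≤ min p.1 p.2 ∧ min p.1 p.2 ≤ 0} :=
    fun q hq => ⟨hq.1.le, hq.2.le⟩
  exact closure_minimal hs hc hp

theorem mem_closure_Gam {p : ℝ × ℝ} (hp : min p.1 p.2 = -1 ∨ min p.1 p.2 = 0) :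
    p ∈ closure Gam := by
  rcases hp with hp | hp
  · have ht : Filter.Tendsto (fun t : ℝ => (p.1 + t, p.2 + t)) (nhdsWithin 0 (Ioi 0)) (nhds p) := by
      have : Continuous (fun t : ℝ => (p.1 + t, p.2 + t)) := by fun_prop
      simpa using (this.tendsto 0).mono_left nhdsWithin_le_nhds
    refine mem_closure_of_tendsto ht ?_
    filter_upwards [Ioo_mem_nhdsGT (show (0:ℝ) < 1 by norm_num)] with t ht
    show -1 < min (p.1 + t) (p.2 + t) ∧ min (p.1 + t) (p.2 + t) < 0
    rw [min_add_add_right, hp]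
    constructor <;> linarith [ht.1, ht.2]
  · have ht : Filter.Tendsto (fun t : ℝ => (p.1 + -t, p.2 + -t)) (nhdsWithin 0 (Ioi 0)) (nhds p) := by
      have : Continuous (fun t : ℝ => (p.1 + -t, p.2 + -t)) := by fun_prop
      simpa using (this.tendsto 0).mono_left nhdsWithin_le_nhds
    refine mem_closure_of_tendsto ht ?_
    filter_upwards [Ioo_mem_nhdsGT (show (0:ℝ) < 1 by norm_num)] with t ht
    show -1 < min (p.1 + -t) (p.2 + -t) ∧ min (p.1 + -t) (p.2 + -t) < 0
    rw [min_add_add_right, hp]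
    constructor <;> linarith [ht.1, ht.2]

/-- The Dirichlet part of `∂Γ_R` is the part of `∂Γ` inside the open box. -/
theorem mem_DirB_iff {R : ℝ} {p : ℝ × ℝ} :
    p ∈ DirB R ↔ (min p.1 p.2 = -1 ∨ min p.1 p.2 = 0) ∧ p ∈ Box (R + 1) := by
  constructor
  · rintro ⟨h1, h2⟩
    have h3 : p ∉ frontier (Box (R + 1)) := fun h => h2 ⟨h1, h⟩
    rw [(isOpen_GamR R).frontier_eq] at h1
    rw [(isOpen_Box _).frontier_eq] at h3
    have hcb : p ∈ closure (Box (R + 1)) := closure_mono inter_subset_right h1.1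
    have hb : p ∈ Box (R + 1) := by
      by_contra h; exact h3 ⟨hcb, h⟩
    refine ⟨?_, hb⟩
    have hg := closure_Gam_sub (closure_mono inter_subset_left h1.1)
    by_contra hne
    push Not at hne
    exact h1.2 ⟨⟨lt_of_le_of_ne hg.1 hne.1.symm, lt_of_le_of_ne hg.2 hne.2⟩, hb⟩
  · rintro ⟨h1, h2⟩
    have hg : p ∈ closure (GamR R) := by
      have := (isOpen_Box (R + 1)).inter_closure (t := Gam) ⟨h2, mem_closure_Gam h1⟩
      rwa [inter_comm] at this
    refine ⟨?_, ?_⟩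
    · rw [(isOpen_GamR R).frontier_eq]
      refine ⟨hg, fun h => ?_⟩
      have h3 := h.1.1
      have h4 := h.1.2
      rcases h1 with h1 | h1 <;> rw [h1] at h3 h4 <;> linarith
    · rintro ⟨-, h⟩
      rw [(isOpen_Box _).frontier_eq] at h
      exact h.2 h2

theorem mem_Box_iff {L : ℝ} {p : ℝ × ℝ} :
    p ∈ Box L ↔ (-L - 1 < p.1 ∧ p.1 < L - 1) ∧ (-L - 1 < p.2 ∧ p.2 < L - 1) := by
  unfold Box
  simp only [mem_ofPred_eq, abs_lt]
  constructor <;> rintro ⟨⟨a, b⟩, c, d⟩ <;> refine ⟨⟨?_, ?_⟩, ?_, ?_⟩ <;> linarith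

theorem mem_GamR_iff {R : ℝ} {p : ℝ × ℝ} :
    p ∈ GamR R ↔ (-1 < p.1 ∧ p.1 < R) ∧ (-1 < p.2 ∧ p.2 < R) ∧ (p.1 < 0 ∨ p.2 < 0) := by
  unfold GamR Gam
  rw [mem_inter_iff, mem_Box_iff, mem_ofPred_eq, lt_min_iff, min_lt_iff]
  constructor
  · rintro ⟨⟨⟨a, b⟩, c⟩, ⟨d, e⟩, f, g⟩
    exact ⟨⟨a, by linarith⟩, ⟨b, by linarith⟩, c⟩
  · rintro ⟨⟨a, b⟩, ⟨c, d⟩, e⟩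
    exact ⟨⟨⟨a, c⟩, e⟩, ⟨by linarith, by linarith⟩, by linarith, by linarith⟩

theorem DirB_mono {R R' : ℝ} (h : R ≤ R') : DirB R ⊆ DirB R' := by
  intro p hp
  rw [mem_DirB_iff] at hp ⊢
  refine ⟨hp.1, ?_⟩
  have := hp.2
  rw [mem_Box_iff] at this ⊢
  obtain ⟨⟨a, b⟩, c, d⟩ := this
  refine ⟨⟨?_, ?_⟩, ?_, ?_⟩ <;> linarith

theorem GamR_eq_of_nonpos {R : ℝ} (h : R ≤ 0) : GamR R = Ioo (-1) R ×ˢ Ioo (-1) R := by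
  ext p
  rw [mem_GamR_iff, mem_prod, mem_Ioo, mem_Ioo]
  constructor
  · tauto
  · rintro ⟨a, b⟩
    exact ⟨a, b, Or.inl (by linarith [a.2])⟩

theorem GamR_subset {R : ℝ} : GamR R ⊆ Ioo (-1) R ×ˢ Ioo (-1) R := by
  intro p hp
  rw [mem_GamR_iff] at hp
  exact ⟨hp.1, hp.2.1⟩

theorem integrableOn_GamR {R : ℝ} {f : ℝ × ℝ → ℝ} (hf : Continuous f) :
    IntegrableOn f (GamR R) := by
  have : IntegrableOn f (Icc (-1) R ×ˢ Icc (-1) R) :=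
    hf.continuousOn.integrableOn_compact (isCompact_Icc.prod isCompact_Icc)
  exact this.mono_set (GamR_subset.trans (prod_mono Ioo_subset_Icc_self Ioo_subset_Icc_self))

theorem integrableOn_rect {a b c d : ℝ} {f : ℝ × ℝ → ℝ} (hf : Continuous f) :
    IntegrableOn f (Ioo a b ×ˢ Ioo c d) := by
  have : IntegrableOn f (Icc a b ×ˢ Icc c d) :=
    hf.continuousOn.integrableOn_compact (isCompact_Icc.prod isCompact_Icc)
  exact this.mono_set (prod_mono Ioo_subset_Icc_self Ioo_subset_Icc_self)

theorem continuous_gradSq2 {u : ℝ × ℝ → ℝ} (hu : ContDiff ℝ 1 u) : Continuous (gradSq2 u) := by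
  unfold gradSq2
  have := hu.continuous_fderiv one_ne_zero
  fun_prop

theorem gradSq2_nonneg (u : ℝ × ℝ → ℝ) (p : ℝ × ℝ) : 0 ≤ gradSq2 u p := by
  unfold gradSq2; positivity

theorem lamR_bddBelow (R : ℝ) : BddBelow {r | ∃ u : ℝ × ℝ → ℝ, AdmR R u ∧
    (∫ p in GamR R, (u p) ^ 2) ≠ 0 ∧
    r = (∫ p in GamR R, gradSq2 u p) / ∫ p in GamR R, (u p) ^ 2} := by
  refine ⟨0, ?_⟩
  rintro r ⟨u, -, -, rfl⟩
  exact div_nonneg (integral_nonneg fun p => gradSq2_nonneg u p)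
    (integral_nonneg fun p => sq_nonneg _)

theorem lamR_nonneg (R : ℝ) : 0 ≤ lamR R := by
  refine Real.sInf_nonneg ?_
  rintro r ⟨u, -, -, rfl⟩
  exact div_nonneg (integral_nonneg fun p => gradSq2_nonneg u p)
    (integral_nonneg fun p => sq_nonneg _)

theorem lamR_mul_le {R : ℝ} {u : ℝ × ℝ → ℝ} (hu : AdmR R u) :
    lamR R * (∫ p in GamR R, (u p) ^ 2) ≤ ∫ p in GamR R, gradSq2 u p := by
  have hg : 0 ≤ ∫ p in GamR R, gradSq2 u p := integral_nonneg fun p => gradSq2_nonneg u p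
  have hn : 0 ≤ ∫ p in GamR R, (u p) ^ 2 := integral_nonneg fun p => sq_nonneg _
  rcases hn.eq_or_lt with h | h
  · rw [← h]; simpa using hg
  · rw [← le_div_iff₀ h]
    exact csInf_le (lamR_bddBelow R) ⟨u, hu, ne_of_gt h, rfl⟩

/-- Partial derivatives as derivatives of the slices. -/
theorem fderiv_e1 {u : ℝ × ℝ → ℝ} (hu : ContDiff ℝ 1 u) (x y : ℝ) :
    fderiv ℝ u (x, y) (1, 0) = deriv (fun s => u (s, y)) x := by
  have h1 : HasFDerivAt u (fderiv ℝ u (x, y)) (x, y) :=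
    (hu.differentiable one_ne_zero _).hasFDerivAt
  have h2 : HasDerivAt (fun s : ℝ => (s, y)) ((1 : ℝ), (0 : ℝ)) x :=
    (hasDerivAt_id x).prodMk (hasDerivAt_const x y)
  exact (h1.comp_hasDerivAt x h2).deriv.symm

theorem fderiv_e2 {u : ℝ × ℝ → ℝ} (hu : ContDiff ℝ 1 u) (x y : ℝ) :
    fderiv ℝ u (x, y) (0, 1) = deriv (fun s => u (x, s)) y := by
  have h1 : HasFDerivAt u (fderiv ℝ u (x, y)) (x, y) :=
    (hu.differentiable one_ne_zero _).hasFDerivAt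
  have h2 : HasDerivAt (fun s : ℝ => (x, s)) ((0 : ℝ), (1 : ℝ)) y :=
    (hasDerivAt_const y x).prodMk (hasDerivAt_id y)
  exact (h1.comp_hasDerivAt y h2).deriv.symm

theorem contDiff_slice_fst {u : ℝ × ℝ → ℝ} (hu : ContDiff ℝ 1 u) (y : ℝ) :
    ContDiff ℝ 1 (fun s => u (s, y)) := by fun_prop

theorem contDiff_slice_snd {u : ℝ × ℝ → ℝ} (hu : ContDiff ℝ 1 u) (x : ℝ) :
    ContDiff ℝ 1 (fun s => u (x, s)) := by fun_prop

/-! ### One-dimensional Poincaré inequalities -/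

/-- Riccati lower bound: completing the square, `v'² - (w v²)' + (w' + w²) v² = (v' - w v)² ≥ 0`. -/
theorem riccati {a b : ℝ} (hab : a ≤ b) {v w w' : ℝ → ℝ} (hv : ContDiff ℝ 1 v)
    (hw : ∀ x ∈ Icc a b, HasDerivAt w (w' x) x) (hw' : ContinuousOn w' (Icc a b)) :
    w b * v b ^ 2 - w a * v a ^ 2 - (∫ x in a..b, (w' x + w x ^ 2) * v x ^ 2)
      ≤ ∫ x in a..b, (deriv v x) ^ 2 := by
  have hc : Continuous v := hv.continuous
  have hd : Continuous (deriv v) := hv.continuous_deriv_one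
  have hwc : ContinuousOn w (Icc a b) := fun x hx => (hw x hx).continuousAt.continuousWithinAt
  have hi1 : IntervalIntegrable (fun x => w' x * v x ^ 2 + w x * (2 * v x * deriv v x)) volume a b := by
    apply ContinuousOn.intervalIntegrable_of_Icc hab
    fun_prop
  have hi2 : IntervalIntegrable (fun x => (w' x + w x ^ 2) * v x ^ 2) volume a b := by
    apply ContinuousOn.intervalIntegrable_of_Icc hab
    fun_prop
  have hi3 : IntervalIntegrable (fun x => deriv v x ^ 2) volume a b :=
    (hd.pow 2).intervalIntegrable _ _
  have hftc := intervalIntegral.integral_eq_sub_of_hasDerivAt (a := a) (b := b)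
    (f := fun x => w x * v x ^ 2) (fun x hx => by
      rw [uIcc_of_le hab] at hx
      have h1 : HasDerivAt v (deriv v x) x := (hv.differentiable one_ne_zero x).hasDerivAt
      refine ((hw x hx).mul (h1.pow 2)).congr_deriv ?_
      simp) hi1
  rw [← hftc, ← intervalIntegral.integral_sub hi1 hi2]
  refine intervalIntegral.integral_mono_on hab (hi1.sub hi2) hi3 fun x hx => ?_
  nlinarith [sq_nonneg (deriv v x - w x * v x)]

theorem riccati_tan {a b θ c : ℝ} (hab : a ≤ b) {v : ℝ → ℝ} (hv : ContDiff ℝ 1 v)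
    (h : ∀ x ∈ Icc a b, c - θ * x ∈ Ioo (-(π / 2)) (π / 2)) :
    θ * tan (c - θ * b) * v b ^ 2 - θ * tan (c - θ * a) * v a ^ 2
      + θ ^ 2 * (∫ x in a..b, v x ^ 2) ≤ ∫ x in a..b, (deriv v x) ^ 2 := by
  have hcos : ∀ x ∈ Icc a b, cos (c - θ * x) ≠ 0 := fun x hx => (cos_pos_of_mem_Ioo (h x hx)).ne'
  have := riccati hab (w := fun x => θ * tan (c - θ * x))
    (w' := fun x => -(θ ^ 2 * (1 / cos (c - θ * x) ^ 2))) hv (fun x hx => by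
      have h1 : HasDerivAt (fun x : ℝ => c - θ * x) (-θ) x := by
        simpa using ((hasDerivAt_id x).const_mul θ).const_sub c
      refine (((Real.hasDerivAt_tan (hcos x hx)).comp x h1).const_mul θ).congr_deriv ?_
      ring) (by
      apply ContinuousOn.neg
      apply ContinuousOn.mul continuousOn_const
      apply ContinuousOn.div continuousOn_const (by fun_prop)
      intro x hx
      exact pow_ne_zero 2 (hcos x hx))
  have he : ∫ x in a..b, (-(θ ^ 2 * (1 / cos (c - θ * x) ^ 2)) + (θ * tan (c - θ * x)) ^ 2) * v x ^ 2
      = ∫ x in a..b, -θ ^ 2 * v x ^ 2 := by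
    apply intervalIntegral.integral_congr
    intro x hx
    rw [uIcc_of_le hab] at hx
    have h0 := hcos x hx
    simp only
    rw [tan_eq_sin_div_cos]
    field_simp
    have := sin_sq_add_cos_sq (c - θ * x)
    linear_combination θ ^ 2 * v x ^ 2 * this
  rw [he, intervalIntegral.integral_const_mul] at this
  linarith

theorem wirtinger_aux {K N D : ℝ} (hK : 0 < K) (h : ∀ θ, 0 < θ → θ < K → θ ^ 2 * N ≤ D) :
    K ^ 2 * N ≤ D := by
  have ht : Filter.Tendsto (fun θ : ℝ => θ ^ 2 * N) (nhdsWithin K (Iio K)) (nhds (K ^ 2 * N)) := by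
    have : Continuous fun θ : ℝ => θ ^ 2 * N := by fun_prop
    exact (this.tendsto K).mono_left nhdsWithin_le_nhds
  refine le_of_tendsto ht ?_
  filter_upwards [Ioo_mem_nhdsLT hK] with θ hθ using h θ hθ.1 hθ.2

/-- Sharp Poincaré inequality with a Dirichlet condition at the left end only. -/
theorem wirtinger_left {a b : ℝ} (hab : a < b) {v : ℝ → ℝ} (hv : ContDiff ℝ 1 v) (h0 : v a = 0) :
    (π / (2 * (b - a))) ^ 2 * (∫ x in a..b, v x ^ 2) ≤ ∫ x in a..b, (deriv v x) ^ 2 := by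
  have hl : 0 < b - a := by linarith
  refine wirtinger_aux (by positivity) fun θ h1 h2 => ?_
  rw [lt_div_iff₀ (by positivity)] at h2
  have := riccati_tan (c := θ * b) (θ := θ) hab.le hv (fun x hx => ⟨by nlinarith [hx.2, pi_pos],
    by nlinarith [hx.1]⟩)
  simpa [h0] using this

/-- Sharp Poincaré inequality with a Dirichlet condition at the right end only. -/
theorem wirtinger_right {a b : ℝ} (hab : a < b) {v : ℝ → ℝ} (hv : ContDiff ℝ 1 v) (h0 : v b = 0) :
    (π / (2 * (b - a))) ^ 2 * (∫ x in a..b, v x ^ 2) ≤ ∫ x in a..b, (deriv v x) ^ 2 := by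
  have hl : 0 < b - a := by linarith
  refine wirtinger_aux (by positivity) fun θ h1 h2 => ?_
  rw [lt_div_iff₀ (by positivity)] at h2
  have := riccati_tan (c := θ * a) (θ := θ) hab.le hv (fun x hx => ⟨by nlinarith [hx.2],
    by nlinarith [hx.1, pi_pos]⟩)
  simpa [h0] using this

/-- Poincaré inequality on `(-1,0)` with Dirichlet conditions at both ends. -/
theorem wirtinger_both {v : ℝ → ℝ} (hv : ContDiff ℝ 1 v) (h0 : v (-1) = 0) (h1 : v 0 = 0) :
    π ^ 2 * (∫ x in (-1 : ℝ)..0, v x ^ 2) ≤ ∫ x in (-1 : ℝ)..0, (deriv v x) ^ 2 := by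
  have hc : Continuous v := hv.continuous
  have hd : Continuous (deriv v) := hv.continuous_deriv_one
  have e1 := wirtinger_left (a := -1) (b := -1 / 2) (by norm_num) hv h0
  have e2 := wirtinger_right (a := -1 / 2) (b := 0) (by norm_num) hv h1
  rw [← intervalIntegral.integral_add_adjacent_intervals (a := -1) (b := -1 / 2) (c := 0)
      (f := fun x => (v x) ^ 2) ((hc.pow 2).intervalIntegrable _ _) ((hc.pow 2).intervalIntegrable _ _),
    ← intervalIntegral.integral_add_adjacent_intervals (a := -1) (b := -1 / 2) (c := 0)
      (f := fun x => (deriv v x) ^ 2)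
      ((hd.pow 2).intervalIntegrable _ _) ((hd.pow 2).intervalIntegrable _ _)]
  have e3 : π / (2 * (-1 / 2 - -1)) = π := by norm_num
  have e4 : π / (2 * (0 - -1 / 2)) = π := by norm_num
  rw [e3] at e1
  rw [e4] at e2
  linarith

/-- A one-dimensional bound for a strip crossing the corner square: part of the excess energy
`π² - π²/2` available in the arm pays for a strict gain in the corner. -/
theorem strip_bound {v : ℝ → ℝ} (hv : ContDiff ℝ 1 v) (h0 : v (-1) = 0) :
    (π / 2 + 1 / 10) ^ 2 * (∫ x in (-1 : ℝ)..0, v x ^ 2) ≤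
      (∫ x in (-1 : ℝ)..0, (deriv v x) ^ 2) + (∫ x in (0 : ℝ)..1, (deriv v x) ^ 2)
        + 2 * ∫ x in (0 : ℝ)..1, v x ^ 2 := by
  have hc : Continuous v := hv.continuous
  have h1 := riccati_tan (a := -1) (b := 0) (c := -1 / 5) (θ := π / 2 + 1 / 10) (by norm_num) hv
    (fun x hx => ⟨by nlinarith [hx.2, pi_gt_three], by nlinarith [hx.1, pi_gt_three]⟩)
  have h2 := riccati (a := 0) (b := 1) (w := fun t => t - 1) (w' := fun _ => 1) (by norm_num) hv
    (fun x _ => (hasDerivAt_id x).sub_const 1) continuousOn_const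
  have h3 : ∫ x in (0 : ℝ)..1, (1 + (x - 1) ^ 2) * v x ^ 2 ≤ ∫ x in (0 : ℝ)..1, 2 * v x ^ 2 := by
    refine intervalIntegral.integral_mono_on (by norm_num)
      ((by fun_prop : Continuous _).intervalIntegrable _ _)
      ((by fun_prop : Continuous _).intervalIntegrable _ _) fun x hx => ?_
    apply mul_le_mul_of_nonneg_right _ (sq_nonneg _)
    nlinarith [hx.1, hx.2]
  rw [intervalIntegral.integral_const_mul] at h3
  have h4 : (π / 2 + 1 / 10) * tan (1 / 5) ≤ 1 := by
    have hcos : 1 - (1 / 5 : ℝ) ^ 2 / 2 ≤ cos (1 / 5) := one_sub_sq_div_two_le_cos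
    have hsin : sin (1 / 5 : ℝ) ≤ 1 / 5 := sin_le (by norm_num)
    have hcp : 0 < cos (1 / 5 : ℝ) := by linarith [hcos]
    rw [tan_eq_sin_div_cos, mul_div_assoc', div_le_one hcp]
    nlinarith [pi_lt_d2, pi_gt_three]
  have e : tan (-1 / 5 - (π / 2 + 1 / 10) * 0) = - tan (1 / 5) := by
    rw [← tan_neg]; congr 1; ring
  rw [e, h0] at h1
  simp only [sub_self, zero_mul, zero_sub] at h2
  nlinarith [sq_nonneg (v 0)]

/-! ### Iterated integrals and the square -/

theorem integral_rect {a b c d : ℝ} (hab : a ≤ b) (hcd : c ≤ d) {f : ℝ × ℝ → ℝ}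
    (hf : Continuous f) :
    ∫ p in Ioo a b ×ˢ Ioo c d, f p = ∫ x in a..b, ∫ y in c..d, f (x, y) := by
  rw [Measure.volume_eq_prod, setIntegral_prod f (by
    rw [← Measure.volume_eq_prod]; exact integrableOn_rect hf), intervalIntegral.integral_of_le hab,
    integral_Ioc_eq_integral_Ioo]
  congr 1; ext x
  rw [intervalIntegral.integral_of_le hcd, integral_Ioc_eq_integral_Ioo]

theorem integral_rect_swap {a b c d : ℝ} (hab : a ≤ b) (hcd : c ≤ d) {f : ℝ × ℝ → ℝ}
    (hf : Continuous f) :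
    ∫ p in Ioo a b ×ˢ Ioo c d, f p = ∫ y in c..d, ∫ x in a..b, f (x, y) := by
  rw [Measure.volume_eq_prod, ← setIntegral_prod_swap, ← Measure.volume_eq_prod,
    integral_rect hcd hab (f := fun z : ℝ × ℝ => f z.swap) (hf.comp continuous_swap)]
  rfl

theorem integral_rect_mul {a b c d : ℝ} (hab : a ≤ b) (hcd : c ≤ d) (f g : ℝ → ℝ) :
    ∫ p in Ioo a b ×ˢ Ioo c d, f p.1 * g p.2 = (∫ x in a..b, f x) * ∫ y in c..d, g y := by
  rw [Measure.volume_eq_prod, setIntegral_prod_mul, intervalIntegral.integral_of_le hab,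
    intervalIntegral.integral_of_le hcd, integral_Ioc_eq_integral_Ioo,
    integral_Ioc_eq_integral_Ioo]

theorem rect_mono_snd {a b c d : ℝ} (hab : a ≤ b) (hcd : c ≤ d) {f g : ℝ × ℝ → ℝ}
    (hf : Continuous f) (hg : Continuous g)
    (h : ∀ x ∈ Ioo a b, ∫ y in c..d, f (x, y) ≤ ∫ y in c..d, g (x, y)) :
    ∫ p in Ioo a b ×ˢ Ioo c d, f p ≤ ∫ p in Ioo a b ×ˢ Ioo c d, g p := by
  rw [integral_rect hab hcd hf, integral_rect hab hcd hg]
  refine intervalIntegral.integral_mono_on_of_le_Ioo hab ?_ ?_ h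
  · exact (intervalIntegral.continuous_parametric_intervalIntegral_of_continuous'
      (f := fun x y => f (x, y)) (by exact hf) c d).intervalIntegrable _ _
  · exact (intervalIntegral.continuous_parametric_intervalIntegral_of_continuous'
      (f := fun x y => g (x, y)) (by exact hg) c d).intervalIntegrable _ _

theorem rect_mono_fst {a b c d : ℝ} (hab : a ≤ b) (hcd : c ≤ d) {f g : ℝ × ℝ → ℝ}
    (hf : Continuous f) (hg : Continuous g)
    (h : ∀ y ∈ Ioo c d, ∫ x in a..b, f (x, y) ≤ ∫ x in a..b, g (x, y)) :
    ∫ p in Ioo a b ×ˢ Ioo c d, f p ≤ ∫ p in Ioo a b ×ˢ Ioo c d, g p := by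
  rw [integral_rect_swap hab hcd hf, integral_rect_swap hab hcd hg]
  refine intervalIntegral.integral_mono_on_of_le_Ioo hcd ?_ ?_ h
  · exact (intervalIntegral.continuous_parametric_intervalIntegral_of_continuous'
      (f := fun y x => f (x, y)) (by fun_prop) a b).intervalIntegrable _ _
  · exact (intervalIntegral.continuous_parametric_intervalIntegral_of_continuous'
      (f := fun y x => g (x, y)) (by fun_prop) a b).intervalIntegrable _ _

/-- The `x`-part of the Dirichlet energy density. -/
def gx (u : ℝ × ℝ → ℝ) (p : ℝ × ℝ) : ℝ := (fderiv ℝ u p (1, 0)) ^ 2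

/-- The `y`-part of the Dirichlet energy density. -/
def gy (u : ℝ × ℝ → ℝ) (p : ℝ × ℝ) : ℝ := (fderiv ℝ u p (0, 1)) ^ 2

theorem gradSq2_eq (u : ℝ × ℝ → ℝ) : gradSq2 u = fun p => gx u p + gy u p := rfl

theorem gx_nonneg (u : ℝ × ℝ → ℝ) (p : ℝ × ℝ) : 0 ≤ gx u p := sq_nonneg _

theorem gy_nonneg (u : ℝ × ℝ → ℝ) (p : ℝ × ℝ) : 0 ≤ gy u p := sq_nonneg _

theorem continuous_gx {u : ℝ × ℝ → ℝ} (hu : ContDiff ℝ 1 u) : Continuous (gx u) := by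
  unfold gx
  have := hu.continuous_fderiv one_ne_zero
  fun_prop

theorem continuous_gy {u : ℝ × ℝ → ℝ} (hu : ContDiff ℝ 1 u) : Continuous (gy u) := by
  unfold gy
  have := hu.continuous_fderiv one_ne_zero
  fun_prop

theorem gx_slice {u : ℝ × ℝ → ℝ} (hu : ContDiff ℝ 1 u) (x y : ℝ) :
    gx u (x, y) = (deriv (fun s => u (s, y)) x) ^ 2 := by
  unfold gx; rw [fderiv_e1 hu]

theorem gy_slice {u : ℝ × ℝ → ℝ} (hu : ContDiff ℝ 1 u) (x y : ℝ) :
    gy u (x, y) = (deriv (fun s => u (x, s)) y) ^ 2 := by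
  unfold gy; rw [fderiv_e2 hu]

/-- Admissible functions vanish on the outer edges `x = -1` of the guide. -/
theorem AdmR.left_zero {R : ℝ} {u : ℝ × ℝ → ℝ} (hu : AdmR R u) {y : ℝ} (h1 : -1 ≤ y) (h2 : y < R) :
    u (-1, y) = 0 := by
  refine hu.2 _ (mem_DirB_iff.2 ⟨Or.inl (min_eq_left h1), mem_Box_iff.2 ?_⟩)
  refine ⟨⟨?_, ?_⟩, ?_, ?_⟩ <;> simp only <;> linarith

theorem AdmR.bot_zero {R : ℝ} {u : ℝ × ℝ → ℝ} (hu : AdmR R u) {x : ℝ} (h1 : -1 ≤ x) (h2 : x < R) :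
    u (x, -1) = 0 := by
  refine hu.2 _ (mem_DirB_iff.2 ⟨Or.inl (min_eq_right h1), mem_Box_iff.2 ?_⟩)
  refine ⟨⟨?_, ?_⟩, ?_, ?_⟩ <;> simp only <;> linarith

/-- Admissible functions vanish on the inner edges `x = 0`, `y ≥ 0` of the guide. -/
theorem AdmR.inner_left_zero {R : ℝ} {u : ℝ × ℝ → ℝ} (hu : AdmR R u) {y : ℝ} (h1 : 0 ≤ y)
    (h2 : y < R) : u (0, y) = 0 := by
  refine hu.2 _ (mem_DirB_iff.2 ⟨Or.inr (min_eq_left h1), mem_Box_iff.2 ?_⟩)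
  refine ⟨⟨?_, ?_⟩, ?_, ?_⟩ <;> simp only <;> linarith

theorem AdmR.inner_bot_zero {R : ℝ} {u : ℝ × ℝ → ℝ} (hu : AdmR R u) {x : ℝ} (h1 : 0 ≤ x)
    (h2 : x < R) : u (x, 0) = 0 := by
  refine hu.2 _ (mem_DirB_iff.2 ⟨Or.inr (min_eq_right h1), mem_Box_iff.2 ?_⟩)
  refine ⟨⟨?_, ?_⟩, ?_, ?_⟩ <;> simp only <;> linarith

theorem square_lower {R : ℝ} (h1 : -1 < R) (h2 : R ≤ 0) {u : ℝ × ℝ → ℝ} (hu : AdmR R u) :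
    π ^ 2 / (2 * (1 + R) ^ 2) * (∫ p in GamR R, (u p) ^ 2) ≤ ∫ p in GamR R, gradSq2 u p := by
  have hc : Continuous u := hu.1.continuous
  have hR : (0 : ℝ) < 1 + R := by linarith
  have hx : (π / (2 * (R - -1))) ^ 2 * (∫ p in GamR R, (u p) ^ 2) ≤ ∫ p in GamR R, gx u p := by
    rw [GamR_eq_of_nonpos h2, ← integral_const_mul]
    refine rect_mono_fst h1.le h1.le (by fun_prop) (continuous_gx hu.1) fun y hy => ?_
    simp only [gx_slice hu.1]
    rw [intervalIntegral.integral_const_mul]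
    exact wirtinger_left h1 (contDiff_slice_fst hu.1 y) (hu.left_zero hy.1.le hy.2)
  have hy : (π / (2 * (R - -1))) ^ 2 * (∫ p in GamR R, (u p) ^ 2) ≤ ∫ p in GamR R, gy u p := by
    rw [GamR_eq_of_nonpos h2, ← integral_const_mul]
    refine rect_mono_snd h1.le h1.le (by fun_prop) (continuous_gy hu.1) fun x hx => ?_
    simp only [gy_slice hu.1]
    rw [intervalIntegral.integral_const_mul]
    exact wirtinger_left h1 (contDiff_slice_snd hu.1 x) (hu.bot_zero hx.1.le hx.2)
  rw [gradSq2_eq, integral_add (integrableOn_GamR (continuous_gx hu.1))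
    (integrableOn_GamR (continuous_gy hu.1))]
  have e : π ^ 2 / (2 * (1 + R) ^ 2) = 2 * (π / (2 * (R - -1))) ^ 2 := by
    have : R - -1 = 1 + R := by ring
    rw [this]; field_simp
  rw [e]; linarith

theorem square_test {R : ℝ} (h1 : -1 < R) (h2 : R ≤ 0) :
    ∃ u, AdmR R u ∧ (∫ p in GamR R, (u p) ^ 2) ≠ 0 ∧
      π ^ 2 / (2 * (1 + R) ^ 2) = (∫ p in GamR R, gradSq2 u p) / ∫ p in GamR R, (u p) ^ 2 := by
  have hR : (0 : ℝ) < 1 + R := by linarith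
  set k : ℝ := π / (2 * (1 + R)) with hk
  have hkp : 0 < k := by positivity
  set s : ℝ → ℝ := fun x => sin (k * (x + 1)) with hs
  set c : ℝ → ℝ := fun x => cos (k * (x + 1)) with hcdef
  have hsd : ∀ x, HasDerivAt s (k * c x) x := fun x => by
    have h : HasDerivAt (fun x : ℝ => k * (x + 1)) k x := by
      simpa using ((hasDerivAt_id x).add_const 1).const_mul k
    refine h.sin.congr_deriv ?_
    simp only [hcdef]; ring
  have hcd : ∀ x, HasDerivAt c (-(k * s x)) x := fun x => by
    have h : HasDerivAt (fun x : ℝ => k * (x + 1)) k x := by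
      simpa using ((hasDerivAt_id x).add_const 1).const_mul k
    refine h.cos.congr_deriv ?_
    simp only [hs]; ring
  have hsc : Continuous s := by fun_prop
  have hcc : Continuous c := by fun_prop
  have hs2 : IntervalIntegrable (fun x => s x ^ 2) volume (-1) R :=
    (hsc.pow 2).intervalIntegrable _ _
  have hc2 : IntervalIntegrable (fun x => c x ^ 2) volume (-1) R :=
    (hcc.pow 2).intervalIntegrable _ _
  set S := ∫ x in (-1 : ℝ)..R, s x ^ 2 with hS
  set C := ∫ x in (-1 : ℝ)..R, c x ^ 2 with hC
  have hSC : S + C = 1 + R := by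
    rw [hS, hC, ← intervalIntegral.integral_add hs2 hc2]
    simp only [hs, hcdef, sin_sq_add_cos_sq]
    simp; ring
  have hSC' : k * (C - S) = 0 := by
    have := intervalIntegral.integral_eq_sub_of_hasDerivAt (a := -1) (b := R)
      (f := fun x => s x * c x) (fun x _ => (hsd x).mul (hcd x))
      ((by fun_prop : Continuous _).intervalIntegrable _ _)
    have e1 : c R = 0 := by
      simp only [hcdef, hk]
      rw [← cos_pi_div_two]; congr 1; field_simp; ring
    have e2 : s (-1) = 0 := by simp [hs]
    rw [e1, e2] at this
    rw [hS, hC, ← intervalIntegral.integral_sub hc2 hs2, ← intervalIntegral.integral_const_mul]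
    rw [mul_zero, zero_mul, sub_zero] at this
    rw [← this]
    congr 1; ext x; ring
  have hCS : C = S := by
    rcases mul_eq_zero.1 hSC' with h | h
    · exact absurd h hkp.ne'
    · linarith
  have hSp : 0 < S := by linarith
  have hu : ContDiff ℝ 1 (fun p : ℝ × ℝ => s p.1 * s p.2) := by fun_prop
  have hn : ∫ p in GamR R, (s p.1 * s p.2) ^ 2 = S * S := by
    rw [GamR_eq_of_nonpos h2, hS, ← integral_rect_mul h1.le h1.le]
    congr 1; ext p; ring
  have hgx : ∫ p in GamR R, gx (fun p : ℝ × ℝ => s p.1 * s p.2) p = k ^ 2 * C * S := by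
    rw [GamR_eq_of_nonpos h2, hS, hC, ← intervalIntegral.integral_const_mul (k ^ 2),
      ← integral_rect_mul h1.le h1.le]
    congr 1; ext ⟨x, y⟩
    rw [gx_slice hu, ((hsd x).mul_const (s y)).deriv]
    simp only; ring
  have hgy : ∫ p in GamR R, gy (fun p : ℝ × ℝ => s p.1 * s p.2) p = S * (k ^ 2 * C) := by
    rw [GamR_eq_of_nonpos h2, hS, hC, ← intervalIntegral.integral_const_mul,
      ← integral_rect_mul h1.le h1.le]
    congr 1; ext ⟨x, y⟩
    rw [gy_slice hu, ((hsd y).const_mul (s x)).deriv]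
    simp only; ring
  refine ⟨fun p => s p.1 * s p.2, ⟨hu, fun p hp => ?_⟩, ?_, ?_⟩
  · rw [mem_DirB_iff, mem_Box_iff] at hp
    have e2 : s (-1) = 0 := by simp [hs]
    rcases hp with ⟨h | h, ⟨-, h3⟩, -, h4⟩
    · rcases min_choice p.1 p.2 with h5 | h5 <;> rw [h] at h5 <;> simp [← h5, e2]
    · have := min_le_left p.1 p.2
      linarith
  · rw [hn]; positivity
  · rw [hn, gradSq2_eq, integral_add (integrableOn_GamR (continuous_gx hu))
      (integrableOn_GamR (continuous_gy hu)), hgx, hgy, hCS, hk]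
    field_simp; norm_num

theorem lamR_left {R : ℝ} (h1 : -1 < R) (h2 : R ≤ 0) : lamR R = π ^ 2 / (2 * (1 + R) ^ 2) := by
  refine IsLeast.csInf_eq ⟨square_test h1 h2, ?_⟩
  rintro r ⟨u, hu, hn, rfl⟩
  have hN : 0 < ∫ p in GamR R, (u p) ^ 2 :=
    lt_of_le_of_ne (integral_nonneg fun p => sq_nonneg _) hn.symm
  rw [le_div_iff₀ hN]
  exact square_lower h1 h2 hu

/-! ### Profiles of the trial function -/

/-- A differentiable function with zero derivative at `0` remains differentiable when continued by its value at
`0` to the right of `0`. -/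
theorem hasDerivAt_freeze {g g' : ℝ → ℝ} (hg : ∀ x, HasDerivAt g (g' x) x) (h0 : g' 0 = 0) (x : ℝ) :
    HasDerivAt (fun x => g (min x 0)) (g' (min x 0)) x := by
  rcases lt_trichotomy x 0 with h | h | h
  · rw [min_eq_left h.le]
    refine (hg x).congr_of_eventuallyEq ?_
    filter_upwards [Iio_mem_nhds h] with y hy
    rw [min_eq_left (le_of_lt hy)]
  · subst h
    rw [min_self, h0]
    have h1 : HasDerivWithinAt (fun x => g (min x 0)) 0 (Iic 0) 0 := by
      have := (hg 0).hasDerivWithinAt (s := Iic 0)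
      rw [h0] at this
      exact this.congr (fun y hy => by rw [min_eq_left hy]) (by simp)
    have h2 : HasDerivWithinAt (fun x => g (min x 0)) 0 (Ici 0) 0 :=
      (hasDerivWithinAt_const (0 : ℝ) (Ici 0) (g 0)).congr
        (fun y hy => by rw [min_eq_right hy]) (by simp)
    have := h1.union h2
    rwa [Iic_union_Ici, hasDerivWithinAt_univ] at this
  · rw [min_eq_right h.le, h0]
    refine (hasDerivAt_const x (g 0)).congr_of_eventuallyEq ?_
    filter_upwards [Ioi_mem_nhds h] with y hy
    rw [min_eq_right (le_of_lt hy)]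

theorem contDiff_of_hasDerivAt {f f' : ℝ → ℝ} (h : ∀ x, HasDerivAt f (f' x) x) (hc : Continuous f') :
    ContDiff ℝ 1 f := by
  rw [contDiff_one_iff_deriv]
  refine ⟨fun x => (h x).differentiableAt, ?_⟩
  have : deriv f = f' := funext fun x => (h x).deriv
  rwa [this]

theorem integral_freeze {R : ℝ} (hR : 0 ≤ R) {F : ℝ → ℝ} (hF : Continuous F) :
    ∫ x in (-1 : ℝ)..R, F (min x 0) = (∫ x in (-1 : ℝ)..0, F x) + R * F 0 := by
  have hc : Continuous fun x : ℝ => F (min x 0) := by fun_prop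
  rw [← intervalIntegral.integral_add_adjacent_intervals (b := 0)
    (hc.intervalIntegrable _ _) (hc.intervalIntegrable _ _)]
  congr 1
  · refine intervalIntegral.integral_congr fun x hx => ?_
    rw [uIcc_of_le (by norm_num)] at hx
    simp only [min_eq_left hx.2]
  · have : ∫ x in (0 : ℝ)..R, F (min x 0) = ∫ x in (0 : ℝ)..R, F 0 := by
      refine intervalIntegral.integral_congr fun x hx => ?_
      rw [uIcc_of_le hR] at hx
      simp only [min_eq_right hx.1]
    rw [this]; simp

theorem integral_rect_three {a b c d : ℝ} (hab : a ≤ b) (hcd : c ≤ d) {f₁ f₂ f₃ g₁ g₂ g₃ : ℝ → ℝ}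
    (h1 : Continuous f₁) (h2 : Continuous f₂) (h3 : Continuous f₃)
    (k1 : Continuous g₁) (k2 : Continuous g₂) (k3 : Continuous g₃) :
    ∫ p in Ioo a b ×ˢ Ioo c d, (f₁ p.1 * g₁ p.2 + f₂ p.1 * g₂ p.2 + 2 * (f₃ p.1 * g₃ p.2))
      = (∫ x in a..b, f₁ x) * (∫ y in c..d, g₁ y) + (∫ x in a..b, f₂ x) * (∫ y in c..d, g₂ y)
        + 2 * ((∫ x in a..b, f₃ x) * ∫ y in c..d, g₃ y) := by
  rw [integral_add (integrableOn_rect (by fun_prop)) (integrableOn_rect (by fun_prop)),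
    integral_add (integrableOn_rect (by fun_prop)) (integrableOn_rect (by fun_prop)),
    integral_const_mul, integral_rect_mul hab hcd, integral_rect_mul hab hcd,
    integral_rect_mul hab hcd]

/-- `1 - x²`: the profile along the arms inside the corner. -/
def prA (x : ℝ) : ℝ := 1 - x ^ 2

/-- A smooth regularisation of the transverse ground state `|sin πx|`, flat at `0`. -/
def prT (ε x : ℝ) : ℝ := √(sin (π * x) ^ 2 + ε ^ 2) - ε

/-- The derivative of `prT`. -/
def prT' (ε x : ℝ) : ℝ := π * sin (π * x) * cos (π * x) / √(sin (π * x) ^ 2 + ε ^ 2)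

theorem hasDerivAt_prA (x : ℝ) : HasDerivAt prA (-2 * x) x := by
  refine ((hasDerivAt_pow 2 x).const_sub 1).congr_deriv ?_
  simp

theorem prT_rad {ε : ℝ} (hε : 0 < ε) (x : ℝ) : 0 < sin (π * x) ^ 2 + ε ^ 2 := by positivity

theorem hasDerivAt_prT {ε : ℝ} (hε : 0 < ε) (x : ℝ) : HasDerivAt (prT ε) (prT' ε x) x := by
  have h : HasDerivAt (fun x : ℝ => π * x) π x := by
    simpa using (hasDerivAt_id x).const_mul π
  refine ((((h.sin.pow 2).add_const (ε ^ 2)).sqrt (prT_rad hε x).ne').sub_const ε).congr_deriv ?_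
  unfold prT'
  have := Real.sqrt_pos.2 (prT_rad hε x)
  simp only [Nat.cast_ofNat]
  field_simp
  simp
  rw [mul_div_assoc, div_self this.ne', mul_one, mul_comm]

theorem continuous_prT' {ε : ℝ} (hε : 0 < ε) : Continuous (prT' ε) := by
  unfold prT'
  refine Continuous.div (by fun_prop) (by fun_prop) fun x => ?_
  exact (Real.sqrt_pos.2 (prT_rad hε x)).ne'

theorem continuous_prT (ε : ℝ) : Continuous (prT ε) := by unfold prT; fun_prop

theorem continuous_prA : Continuous prA := by unfold prA; fun_prop

theorem prT_zero {ε : ℝ} (hε : 0 < ε) : prT ε 0 = 0 := by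
  simp [prT, Real.sqrt_sq hε.le]

theorem prT_neg_one {ε : ℝ} (hε : 0 < ε) : prT ε (-1) = 0 := by
  simp [prT, Real.sqrt_sq hε.le]

theorem prT'_zero (ε : ℝ) : prT' ε 0 = 0 := by simp [prT']

theorem sin_nonpos_aux {x : ℝ} (hx : x ∈ Icc (-1 : ℝ) 0) : sin (π * x) ≤ 0 := by
  apply sin_nonpos_of_nonpos_of_neg_pi_le <;> nlinarith [hx.1, hx.2, pi_pos]

theorem prT_le {ε : ℝ} (hε : 0 < ε) {x : ℝ} (hx : x ∈ Icc (-1 : ℝ) 0) :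
    prT ε x ≤ -sin (π * x) := by
  have h := sin_nonpos_aux hx
  unfold prT
  rw [sub_le_iff_le_add, Real.sqrt_le_left (by linarith)]
  nlinarith

theorem le_prT {ε : ℝ} (x : ℝ) :
    -sin (π * x) - ε ≤ prT ε x := by
  unfold prT
  have : -sin (π * x) ≤ √(sin (π * x) ^ 2 + ε ^ 2) := by
    apply Real.le_sqrt_of_sq_le; nlinarith
  linarith

theorem prT_nonneg {ε : ℝ} (x : ℝ) : 0 ≤ prT ε x := by
  unfold prT
  have : ε ≤ √(sin (π * x) ^ 2 + ε ^ 2) := by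
    apply Real.le_sqrt_of_sq_le; nlinarith [sq_nonneg (sin (π * x))]
  linarith

theorem prT'_sq_le {ε : ℝ} (hε : 0 < ε) (x : ℝ) : prT' ε x ^ 2 ≤ π ^ 2 * cos (π * x) ^ 2 := by
  unfold prT'
  rw [div_pow, Real.sq_sqrt (prT_rad hε x).le, div_le_iff₀ (prT_rad hε x)]
  have : 0 ≤ π ^ 2 * cos (π * x) ^ 2 * ε ^ 2 := by positivity
  nlinarith

theorem integral_sin_pi_sq : ∫ x in (-1 : ℝ)..0, sin (π * x) ^ 2 = 1 / 2 := by
  have h := intervalIntegral.integral_eq_sub_of_hasDerivAt (a := -1) (b := 0)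
    (f := fun x => x / 2 - sin (π * x) * cos (π * x) / (2 * π)) (f' := fun x => sin (π * x) ^ 2)
    (fun x _ => by
      have h : HasDerivAt (fun x : ℝ => π * x) π x := by
        simpa using (hasDerivAt_id x).const_mul π
      refine (((hasDerivAt_id x).div_const 2).sub ((h.sin.mul h.cos).div_const (2 * π))).congr_deriv ?_
      have := pi_pos
      have := sin_sq_add_cos_sq (π * x)
      field_simp
      linear_combination -this) ((by fun_prop : Continuous _).intervalIntegrable _ _)
  rw [h]; simp; norm_num

theorem integral_cos_pi_sq : ∫ x in (-1 : ℝ)..0, cos (π * x) ^ 2 = 1 / 2 := by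
  have h1 : ∀ x : ℝ, cos (π * x) ^ 2 = 1 - sin (π * x) ^ 2 := fun x => cos_sq' _
  simp only [h1]
  rw [intervalIntegral.integral_sub (by simp)
    ((by fun_prop : Continuous _).intervalIntegrable _ _), integral_sin_pi_sq]
  norm_num

theorem integral_neg_sin : ∫ x in (-1 : ℝ)..0, -sin (π * x) = 2 / π := by
  have h := intervalIntegral.integral_eq_sub_of_hasDerivAt (a := -1) (b := 0)
    (f := fun x => cos (π * x) / π) (f' := fun x => -sin (π * x))
    (fun x _ => by
      have h : HasDerivAt (fun x : ℝ => π * x) π x := by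
        simpa using (hasDerivAt_id x).const_mul π
      refine (h.cos.div_const π).congr_deriv ?_
      have := pi_pos
      field_simp) ((by fun_prop : Continuous _).intervalIntegrable _ _)
  rw [h]; simp; ring

theorem integral_prA_sin : ∫ x in (-1 : ℝ)..0, prA x * -sin (π * x) = 1 / π + 4 / π ^ 3 := by
  have h := intervalIntegral.integral_eq_sub_of_hasDerivAt (a := -1) (b := 0)
    (f := fun x => prA x * (cos (π * x) / π) + (2 / π ^ 2) * (x * sin (π * x))
      + (2 / π ^ 3) * cos (π * x)) (f' := fun x => prA x * -sin (π * x))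
    (fun x _ => by
      have h : HasDerivAt (fun x : ℝ => π * x) π x := by
        simpa using (hasDerivAt_id x).const_mul π
      refine ((((hasDerivAt_prA x).mul (h.cos.div_const π)).add
        (((hasDerivAt_id x).mul h.sin).const_mul (2 / π ^ 2))).add
        (h.cos.const_mul (2 / π ^ 3))).congr_deriv ?_
      have := pi_pos
      simp only [id]
      field_simp
      ring) ((continuous_prA.mul (by fun_prop)).intervalIntegrable _ _)
  rw [h]; simp [prA]; ring

theorem integral_prA_prT_deriv {ε : ℝ} (hε : 0 < ε) :
    ∫ x in (-1 : ℝ)..0, (-2 * x) * prT' ε x ≤ 4 / π := by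
  have hc := continuous_prT' hε
  have hc2 := continuous_prT ε
  have h := intervalIntegral.integral_eq_sub_of_hasDerivAt (a := -1) (b := 0)
    (f := fun x => -2 * x * prT ε x) (f' := fun x => -2 * prT ε x + -2 * x * prT' ε x)
    (fun x _ => by
      refine ((((hasDerivAt_id x).const_mul (-2))).mul (hasDerivAt_prT hε x)).congr_deriv ?_
      simp) ((by fun_prop : Continuous _).intervalIntegrable _ _)
  rw [intervalIntegral.integral_add ((by fun_prop : Continuous _).intervalIntegrable _ _)
    ((by fun_prop : Continuous _).intervalIntegrable _ _), intervalIntegral.integral_const_mul,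
    prT_zero hε, prT_neg_one hε] at h
  have h2 : ∫ x in (-1 : ℝ)..0, prT ε x ≤ ∫ x in (-1 : ℝ)..0, -sin (π * x) :=
    intervalIntegral.integral_mono_on (by norm_num) (hc2.intervalIntegrable _ _)
      ((by fun_prop : Continuous _).intervalIntegrable _ _) fun x hx => prT_le hε hx
  rw [integral_neg_sin] at h2
  have : 4 / π = 2 * (2 / π) := by ring
  linarith

theorem integral_prT_deriv_sq {ε : ℝ} (hε : 0 < ε) :
    ∫ x in (-1 : ℝ)..0, prT' ε x ^ 2 ≤ π ^ 2 / 2 := by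
  have hc := continuous_prT' hε
  have h2 : ∫ x in (-1 : ℝ)..0, prT' ε x ^ 2 ≤ ∫ x in (-1 : ℝ)..0, π ^ 2 * cos (π * x) ^ 2 :=
    intervalIntegral.integral_mono_on (by norm_num) ((hc.pow 2).intervalIntegrable _ _)
      ((by fun_prop : Continuous _).intervalIntegrable _ _) fun x hx => prT'_sq_le hε x
  rw [intervalIntegral.integral_const_mul, integral_cos_pi_sq] at h2
  linarith

theorem integral_prT_sq_le {ε : ℝ} (hε : 0 < ε) :
    ∫ x in (-1 : ℝ)..0, prT ε x ^ 2 ≤ 1 / 2 := by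
  have hc := continuous_prT ε
  rw [← integral_sin_pi_sq]
  refine intervalIntegral.integral_mono_on (by norm_num) ((hc.pow 2).intervalIntegrable _ _)
      ((by fun_prop : Continuous _).intervalIntegrable _ _) fun x hx => ?_
  rw [← neg_sq (sin (π * x))]
  exact pow_le_pow_left₀ (prT_nonneg x) (prT_le hε hx) 2

theorem le_integral_prT_sq {ε : ℝ} (hε : 0 < ε) :
    1 / 2 - 2 * ε ≤ ∫ x in (-1 : ℝ)..0, prT ε x ^ 2 := by
  have hc := continuous_prT ε
  have h : ∫ x in (-1 : ℝ)..0, (sin (π * x) ^ 2 - 2 * ε) ≤ ∫ x in (-1 : ℝ)..0, prT ε x ^ 2 := by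
    refine intervalIntegral.integral_mono_on (by norm_num)
      ((by fun_prop : Continuous _).intervalIntegrable _ _)
      ((hc.pow 2).intervalIntegrable _ _) fun x hx => ?_
    have h1 := le_prT (ε := ε) x
    have h2 := prT_nonneg (ε := ε) x
    have h3 := prT_le hε hx
    have h4 := neg_one_le_sin (π * x)
    have h5 := sin_nonpos_aux hx
    nlinarith
  rw [intervalIntegral.integral_sub ((by fun_prop : Continuous _).intervalIntegrable _ _)
    (by simp), integral_sin_pi_sq] at h
  simp at h
  linarith

theorem le_integral_prA_prT {ε : ℝ} (hε : 0 < ε) :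
    1 / π + 4 / π ^ 3 - ε ≤ ∫ x in (-1 : ℝ)..0, prA x * prT ε x := by
  have hc := continuous_prT ε
  have hc2 := continuous_prA
  have h : ∫ x in (-1 : ℝ)..0, (prA x * -sin (π * x) - ε) ≤ ∫ x in (-1 : ℝ)..0, prA x * prT ε x := by
    refine intervalIntegral.integral_mono_on (by norm_num)
      ((by fun_prop : Continuous _).intervalIntegrable _ _)
      ((hc2.mul hc).intervalIntegrable _ _) fun x hx => ?_
    have h1 := le_prT (ε := ε) x
    have h2 : 0 ≤ prA x := by unfold prA; nlinarith [hx.1, hx.2]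
    have h3 : prA x ≤ 1 := by unfold prA; nlinarith [hx.1, hx.2]
    nlinarith
  rw [intervalIntegral.integral_sub ((by fun_prop : Continuous _).intervalIntegrable _ _)
    (by simp), integral_prA_sin] at h
  simp at h
  simp
  linarith

theorem integral_prA_deriv_sq : ∫ x in (-1 : ℝ)..0, (-2 * x) ^ 2 = 4 / 3 := by
  simp only [mul_pow]
  rw [intervalIntegral.integral_const_mul, integral_pow]; norm_num

theorem integral_prA_sq : ∫ x in (-1 : ℝ)..0, prA x ^ 2 ≤ 1 := by
  have hc2 := continuous_prA
  have : ∫ x in (-1 : ℝ)..0, prA x ^ 2 ≤ ∫ x in (-1 : ℝ)..0, 1 := by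
    refine intervalIntegral.integral_mono_on (by norm_num) ((hc2.pow 2).intervalIntegrable _ _)
      (by simp) fun x hx => ?_
    have h2 : 0 ≤ prA x := by unfold prA; nlinarith [hx.1, hx.2]
    have h3 : prA x ≤ 1 := by unfold prA; nlinarith [hx.1, hx.2]
    nlinarith
  simpa using this

/-! ### The trial function and the upper bound `π²` -/

/-- The profile `prA`, continued by its value `1` at `0` along the arm. -/
def trA (x : ℝ) : ℝ := prA (min x 0)

/-- The profile `prT`, continued by its value `0` at `0`. -/
def trT (ε x : ℝ) : ℝ := prT ε (min x 0)

/-- The symmetric trial function on `Γ_R`: transverse ground state along each arm, glued in the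
corner. -/
def trU (ε : ℝ) (p : ℝ × ℝ) : ℝ := trA p.1 * trT ε p.2 + trA p.2 * trT ε p.1

theorem hasDerivAt_trA (x : ℝ) : HasDerivAt trA (-2 * min x 0) x :=
  hasDerivAt_freeze (g := prA) (g' := fun x => -2 * x) hasDerivAt_prA (by simp) x

theorem hasDerivAt_trT {ε : ℝ} (hε : 0 < ε) (x : ℝ) :
    HasDerivAt (trT ε) (prT' ε (min x 0)) x :=
  hasDerivAt_freeze (g := prT ε) (g' := prT' ε) (hasDerivAt_prT hε) (prT'_zero ε) x

theorem contDiff_trU {ε : ℝ} (hε : 0 < ε) : ContDiff ℝ 1 (trU ε) := by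
  have h1 : ContDiff ℝ 1 trA := contDiff_of_hasDerivAt hasDerivAt_trA (by fun_prop)
  have h2 : ContDiff ℝ 1 (trT ε) := contDiff_of_hasDerivAt (hasDerivAt_trT hε)
    ((continuous_prT' hε).comp (by fun_prop))
  unfold trU
  fun_prop

theorem admR_trU {ε : ℝ} (hε : 0 < ε) (R : ℝ) : AdmR R (trU ε) := by
  refine ⟨contDiff_trU hε, fun p hp => ?_⟩
  rw [mem_DirB_iff] at hp
  have hA : trA (-1) = 0 := by simp [trA, prA]
  have hT : trT ε (-1) = 0 := by simp [trT, prT_neg_one hε]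
  unfold trU
  rcases hp.1 with h | h
  · rcases min_choice p.1 p.2 with h5 | h5 <;> rw [h] at h5 <;> simp [← h5, hA, hT]
  · have h1 : 0 ≤ p.1 := h ▸ min_le_left _ _
    have h2 : 0 ≤ p.2 := h ▸ min_le_right _ _
    simp [trT, min_eq_right h1, min_eq_right h2, prT_zero hε]

theorem gx_trU {ε : ℝ} (hε : 0 < ε) (p : ℝ × ℝ) :
    gx (trU ε) p = (-2 * min p.1 0 * trT ε p.2 + trA p.2 * prT' ε (min p.1 0)) ^ 2 := by
  obtain ⟨x, y⟩ := p
  rw [gx_slice (contDiff_trU hε)]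
  have h : HasDerivAt (fun s => trU ε (s, y)) _ x :=
    ((hasDerivAt_trA x).mul_const (trT ε y)).add ((hasDerivAt_trT hε x).const_mul (trA y))
  rw [h.deriv]

theorem gy_trU {ε : ℝ} (hε : 0 < ε) (p : ℝ × ℝ) :
    gy (trU ε) p = (trA p.1 * prT' ε (min p.2 0) + -2 * min p.2 0 * trT ε p.1) ^ 2 := by
  obtain ⟨x, y⟩ := p
  rw [gy_slice (contDiff_trU hε)]
  have h : HasDerivAt (fun s => trU ε (x, s)) _ y :=
    ((hasDerivAt_trT hε y).const_mul (trA x)).add ((hasDerivAt_trA y).mul_const (trT ε x))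
  rw [h.deriv]

theorem trU_sub_zero {ε R : ℝ} (hε : 0 < ε) {p : ℝ × ℝ}
    (hp : p ∈ (Ioo (-1) R ×ˢ Ioo (-1) R) \ GamR R) :
    trU ε p = 0 ∧ gx (trU ε) p = 0 ∧ gy (trU ε) p = 0 := by
  have h : 0 ≤ p.1 ∧ 0 ≤ p.2 := by
    by_contra hcon
    refine hp.2 (mem_GamR_iff.2 ⟨hp.1.1, hp.1.2, ?_⟩)
    by_contra h2
    push Not at h2
    exact hcon h2
  rw [gx_trU hε, gy_trU hε]
  simp [trU, trT, min_eq_right h.1, min_eq_right h.2, prT_zero hε, prT'_zero]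

theorem integral_GamR_eq {R : ℝ} {f : ℝ × ℝ → ℝ}
    (hf : ∀ p ∈ (Ioo (-1) R ×ˢ Ioo (-1) R) \ GamR R, f p = 0) :
    ∫ p in GamR R, f p = ∫ p in Ioo (-1) R ×ˢ Ioo (-1) R, f p :=
  (setIntegral_eq_of_subset_of_forall_sdiff_eq_zero (measurableSet_Ioo.prod measurableSet_Ioo)
    GamR_subset hf).symm

/-- The trial function beats `π²`: up to an error of order `(1 + R) ε`, the energy excess is
`4/3 + 16 P/π - 2 π² P²` with `P ≈ 1/π + 4/π³`, which is negative. -/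
theorem trial_numerics {R ε A S P S' D : ℝ} (hR : 0 ≤ R) (hε : 0 < ε)
    (hεR : (1 + R) * ε = 1 / 1000) (hA0 : 0 ≤ A) (hA1 : A ≤ 1 + R)
    (bS : 1 / 2 - 2 * ε ≤ S) (bS2 : S ≤ 1 / 2) (bP : 1 / π + 4 / π ^ 3 - ε ≤ P)
    (bS' : S' ≤ π ^ 2 / 2) (bD : D ≤ 4 / π) :
    0 < P ∧ 4 / 3 * S + S' * A + 2 * (D * P) + (S * (4 / 3) + A * S' + 2 * (P * D))
      ≤ π ^ 2 * (2 * A * S + 2 * P ^ 2) := by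
  have hε3 : ε ≤ 1 / 1000 := by nlinarith
  have hπ1 := pi_gt_d2
  have hπ2 := pi_lt_d2
  have hπp := pi_pos
  have hPw : 1.39 ≤ π * P := by
    have h1 : π * (1 / π + 4 / π ^ 3 - ε) ≤ π * P := by gcongr
    have h2 : π * (1 / π + 4 / π ^ 3 - ε) = 1 + 4 / π ^ 2 - π * ε := by field_simp
    have h3 : 0.403 ≤ 4 / π ^ 2 := by
      rw [le_div_iff₀ (by positivity)]; nlinarith
    have h4 : π * ε ≤ 3.15 * (1 / 1000) := by gcongr
    rw [h2] at h1
    linarith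
  have hPp : 0 < P := by
    by_contra h
    push Not at h
    nlinarith
  refine ⟨hPp, ?_⟩
  have h1 : A * (S' - π ^ 2 * S) ≤ 2 * π ^ 2 * (1 / 1000) := by
    have h2 : S' - π ^ 2 * S ≤ 2 * π ^ 2 * ε := by nlinarith [sq_nonneg π]
    calc A * (S' - π ^ 2 * S) ≤ A * (2 * π ^ 2 * ε) := by gcongr
      _ ≤ (1 + R) * (2 * π ^ 2 * ε) := by gcongr
      _ = 2 * π ^ 2 * ((1 + R) * ε) := by ring
      _ = _ := by rw [hεR]
  have h3 : D * P ≤ 4 / π * P := by gcongr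
  have h4 : 4 / π * P = 4 / π ^ 2 * (π * P) := by field_simp
  have h5 : 4 / π ^ 2 ≤ 0.406 := by
    rw [div_le_iff₀ (by positivity)]; nlinarith
  have h6 : 4 / π ^ 2 * (π * P) ≤ 0.406 * (π * P) := by gcongr
  have h7 : π ^ 2 ≤ 10 := by nlinarith
  have h8 : π ^ 2 * P ^ 2 = (π * P) ^ 2 := by ring
  have h9 : 1.39 * (π * P) ≤ (π * P) ^ 2 := by nlinarith
  nlinarith

theorem trial_main {R : ℝ} (hR : 0 ≤ R) : ∃ u, AdmR R u ∧ (∫ p in GamR R, (u p) ^ 2) ≠ 0 ∧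
    ∫ p in GamR R, gradSq2 u p ≤ π ^ 2 * ∫ p in GamR R, (u p) ^ 2 := by
  set ε : ℝ := 1 / (1000 * (1 + R)) with hεdef
  have hε : 0 < ε := by positivity
  have hεR : (1 + R) * ε = 1 / 1000 := by rw [hεdef]; field_simp
  have hR1 : (-1 : ℝ) ≤ R := by linarith
  have cA : Continuous trA := continuous_prA.comp (by fun_prop)
  have cT : Continuous (trT ε) := (continuous_prT ε).comp (by fun_prop)
  have cT' : Continuous fun x => prT' ε (min x 0) := (continuous_prT' hε).comp (by fun_prop)
  have kA := continuous_prA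
  have kT := continuous_prT ε
  have kT' := continuous_prT' hε
  have eA : ∫ x in (-1 : ℝ)..R, trA x ^ 2 = (∫ x in (-1 : ℝ)..0, prA x ^ 2) + R := by
    have := integral_freeze hR (F := fun x => prA x ^ 2) (by fun_prop)
    unfold trA; rw [this]; simp [prA]
  have eS : ∫ x in (-1 : ℝ)..R, trT ε x ^ 2 = ∫ x in (-1 : ℝ)..0, prT ε x ^ 2 := by
    have := integral_freeze hR (F := fun x => prT ε x ^ 2) (by fun_prop)
    unfold trT; rw [this]; simp [prT_zero hε]
  have eP : ∫ x in (-1 : ℝ)..R, trA x * trT ε x = ∫ x in (-1 : ℝ)..0, prA x * prT ε x := by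
    have := integral_freeze hR (F := fun x => prA x * prT ε x) (by fun_prop)
    unfold trA trT; rw [this]; simp [prT_zero hε]
  have eA' : ∫ x in (-1 : ℝ)..R, (-2 * min x 0) ^ 2 = 4 / 3 := by
    have := integral_freeze hR (F := fun x => (-2 * x) ^ 2) (by fun_prop)
    rw [this, integral_prA_deriv_sq]; simp
  have eS' : ∫ x in (-1 : ℝ)..R, prT' ε (min x 0) ^ 2 = ∫ x in (-1 : ℝ)..0, prT' ε x ^ 2 := by
    have := integral_freeze hR (F := fun x => prT' ε x ^ 2) (by fun_prop)
    simpa [prT'_zero] using this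
  have eD : ∫ x in (-1 : ℝ)..R, -2 * min x 0 * prT' ε (min x 0)
      = ∫ x in (-1 : ℝ)..0, (-2 * x) * prT' ε x := by
    have := integral_freeze hR (F := fun x => -2 * x * prT' ε x) (by fun_prop)
    rw [this]; simp
  have bA := integral_prA_sq
  have bA0 : 0 ≤ ∫ x in (-1 : ℝ)..0, prA x ^ 2 :=
    intervalIntegral.integral_nonneg (by norm_num) fun x _ => sq_nonneg _
  have bS := le_integral_prT_sq hε
  have bS2 := integral_prT_sq_le hε
  have bP := le_integral_prA_prT hε
  have bS' := integral_prT_deriv_sq hε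
  have bD := integral_prA_prT_deriv hε
  set A := (∫ x in (-1 : ℝ)..0, prA x ^ 2) + R with hA
  set S := ∫ x in (-1 : ℝ)..0, prT ε x ^ 2
  set P := ∫ x in (-1 : ℝ)..0, prA x * prT ε x
  set S' := ∫ x in (-1 : ℝ)..0, prT' ε x ^ 2
  set D := ∫ x in (-1 : ℝ)..0, (-2 * x) * prT' ε x
  have hN : ∫ p in GamR R, (trU ε p) ^ 2 = 2 * A * S + 2 * P ^ 2 := by
    rw [integral_GamR_eq fun p hp => by rw [(trU_sub_zero hε hp).1]; simp]
    have := integral_rect_three hR1 hR1 (f₁ := fun x => trA x ^ 2) (g₁ := fun y => trT ε y ^ 2)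
      (f₂ := fun x => trT ε x ^ 2) (g₂ := fun y => trA y ^ 2)
      (f₃ := fun x => trA x * trT ε x) (g₃ := fun y => trA y * trT ε y)
      (by fun_prop) (by fun_prop) (by fun_prop) (by fun_prop) (by fun_prop) (by fun_prop)
    rw [eA, eS, eP] at this
    rw [show 2 * A * S + 2 * P ^ 2 = A * S + S * A + 2 * (P * P) by ring, ← this]
    congr 1; ext p; unfold trU; ring
  have hGx : ∫ p in GamR R, gx (trU ε) p = 4 / 3 * S + S' * A + 2 * (D * P) := by
    rw [integral_GamR_eq fun p hp => (trU_sub_zero hε hp).2.1]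
    have := integral_rect_three hR1 hR1 (f₁ := fun x => (-2 * min x 0) ^ 2)
      (g₁ := fun y => trT ε y ^ 2)
      (f₂ := fun x => prT' ε (min x 0) ^ 2) (g₂ := fun y => trA y ^ 2)
      (f₃ := fun x => -2 * min x 0 * prT' ε (min x 0)) (g₃ := fun y => trA y * trT ε y)
      (by fun_prop) (by fun_prop) (by fun_prop) (by fun_prop) (by fun_prop) (by fun_prop)
    rw [eA, eS, eP, eA', eS', eD] at this
    rw [← this]
    congr 1; ext p; rw [gx_trU hε]; ring
  have hGy : ∫ p in GamR R, gy (trU ε) p = S * (4 / 3) + A * S' + 2 * (P * D) := by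
    rw [integral_GamR_eq fun p hp => (trU_sub_zero hε hp).2.2]
    have := integral_rect_three hR1 hR1 (g₁ := fun x => (-2 * min x 0) ^ 2)
      (f₁ := fun y => trT ε y ^ 2)
      (g₂ := fun x => prT' ε (min x 0) ^ 2) (f₂ := fun y => trA y ^ 2)
      (g₃ := fun x => -2 * min x 0 * prT' ε (min x 0)) (f₃ := fun y => trA y * trT ε y)
      (by fun_prop) (by fun_prop) (by fun_prop) (by fun_prop) (by fun_prop) (by fun_prop)
    rw [eA, eS, eP, eA', eS', eD] at this
    rw [← this]
    congr 1; ext p; rw [gy_trU hε]; ring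
  have hu := contDiff_trU hε
  obtain ⟨hPp, hfin⟩ := trial_numerics hR hε hεR (by linarith : 0 ≤ A) (by linarith) bS bS2 bP bS' bD
  refine ⟨trU ε, admR_trU hε R, ?_, ?_⟩
  · rw [hN]
    have : 0 ≤ S := intervalIntegral.integral_nonneg (by norm_num) fun x _ => sq_nonneg _
    have : 0 ≤ A := by linarith
    positivity
  · rw [gradSq2_eq, integral_add (integrableOn_GamR (continuous_gx hu))
      (integrableOn_GamR (continuous_gy hu)), hGx, hGy, hN]
    exact hfin

theorem lamR_set_nonempty {R : ℝ} (hR : 0 ≤ R) : {r | ∃ u : ℝ × ℝ → ℝ, AdmR R u ∧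
    (∫ p in GamR R, (u p) ^ 2) ≠ 0 ∧
    r = (∫ p in GamR R, gradSq2 u p) / ∫ p in GamR R, (u p) ^ 2}.Nonempty := by
  obtain ⟨u, h1, h2, -⟩ := trial_main hR
  exact ⟨_, u, h1, h2, rfl⟩

theorem lamR_le_pi_sq {R : ℝ} (hR : 0 ≤ R) : lamR R ≤ π ^ 2 := by
  obtain ⟨u, h1, h2, h3⟩ := trial_main hR
  have hN : 0 < ∫ p in GamR R, (u p) ^ 2 :=
    lt_of_le_of_ne (integral_nonneg fun p => sq_nonneg _) h2.symm
  exact le_of_mul_le_mul_right ((lamR_mul_le h1).trans h3) hN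

theorem le_lamR {R m : ℝ} (hR : 0 ≤ R) (h : ∀ u, AdmR R u →
    m * (∫ p in GamR R, (u p) ^ 2) ≤ ∫ p in GamR R, gradSq2 u p) : m ≤ lamR R := by
  refine le_csInf (lamR_set_nonempty hR) ?_
  rintro r ⟨u, hu, hn, rfl⟩
  have hN : 0 < ∫ p in GamR R, (u p) ^ 2 :=
    lt_of_le_of_ne (integral_nonneg fun p => sq_nonneg _) hn.symm
  rw [le_div_iff₀ hN]
  exact h u hu

/-! ### Monotonicity, and the gap at `R = 1` -/

/-- The guide `Γ_{R'}` is `Γ_R` plus two straight pieces of the arms, up to null sets. -/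
theorem integral_GamR_split {R R' : ℝ} (hR : 0 ≤ R) (hRR : R ≤ R') {f : ℝ × ℝ → ℝ}
    (hf : Continuous f) :
    ∫ p in GamR R', f p = (∫ p in GamR R, f p) + (∫ p in Ioo R R' ×ˢ Ioo (-1) 0, f p)
      + ∫ p in Ioo (-1) 0 ×ˢ Ioo R R', f p := by
  have e : GamR R' = (GamR R ∪ Ico R R' ×ˢ Ioo (-1) 0) ∪ Ioo (-1) 0 ×ˢ Ico R R' := by
    ext p
    simp only [mem_union, mem_GamR_iff, mem_prod, mem_Ioo, mem_Ico]
    constructor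
    · rintro ⟨⟨a, b⟩, ⟨c, d⟩, h⟩
      by_cases h1 : p.1 < R
      · by_cases h2 : p.2 < R
        · exact Or.inl (Or.inl ⟨⟨a, h1⟩, ⟨c, h2⟩, h⟩)
        · refine Or.inr ⟨⟨a, ?_⟩, not_lt.1 h2, d⟩
          rcases h with h | h <;> linarith
      · refine Or.inl (Or.inr ⟨⟨not_lt.1 h1, b⟩, c, ?_⟩)
        rcases h with h | h <;> linarith
    · rintro ((⟨⟨a, b⟩, ⟨c, d⟩, h⟩ | ⟨⟨a, b⟩, c, d⟩) | ⟨⟨a, b⟩, c, d⟩)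
      · exact ⟨⟨a, by linarith⟩, ⟨c, by linarith⟩, h⟩
      · exact ⟨⟨by linarith, b⟩, ⟨c, by linarith⟩, Or.inr d⟩
      · exact ⟨⟨a, by linarith⟩, ⟨by linarith, d⟩, Or.inl b⟩
  have hi : ∀ {a b c d : ℝ}, IntegrableOn f (Icc a b ×ˢ Icc c d) := fun {a b c d} =>
    hf.continuousOn.integrableOn_compact (isCompact_Icc.prod isCompact_Icc)
  have n1 : ∫ p in Ico R R' ×ˢ Ioo (-1) 0, f p = ∫ p in Ioo R R' ×ˢ Ioo (-1) 0, f p :=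
    setIntegral_congr_set (Measure.set_prod_ae_eq Ioo_ae_eq_Ico.symm (Filter.EventuallyEq.refl _ _))
  have n2 : ∫ p in Ioo (-1) 0 ×ˢ Ico R R', f p = ∫ p in Ioo (-1) 0 ×ˢ Ioo R R', f p :=
    setIntegral_congr_set (Measure.set_prod_ae_eq (Filter.EventuallyEq.refl _ _) Ioo_ae_eq_Ico.symm)
  have i2 : IntegrableOn f (Ico R R' ×ˢ Ioo (-1) 0) :=
    hi.mono_set (prod_mono Ico_subset_Icc_self Ioo_subset_Icc_self)
  have i3 : IntegrableOn f (Ioo (-1) 0 ×ˢ Ico R R') :=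
    hi.mono_set (prod_mono Ioo_subset_Icc_self Ico_subset_Icc_self)
  rw [e, setIntegral_union ?_ (measurableSet_Ioo.prod measurableSet_Ico)
    ((integrableOn_GamR hf).union i2) i3, setIntegral_union ?_
    (measurableSet_Ico.prod measurableSet_Ioo) (integrableOn_GamR hf) i2, n1, n2]
  · rw [Set.disjoint_left]
    intro p h1 h2
    rw [mem_GamR_iff] at h1
    linarith [h2.1.1, h1.1.2]
  · rw [Set.disjoint_left]
    rintro p (h1 | h1) h2
    · rw [mem_GamR_iff] at h1
      linarith [h2.2.1, h1.2.1.2]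
    · linarith [h1.1.1, h2.1.2]

/-- The straight arms carry transverse energy at least `π²`. -/
theorem arm_x_lower {R R' : ℝ} (hR : 0 ≤ R) (hRR : R ≤ R') {u : ℝ × ℝ → ℝ} (hu : AdmR R' u) :
    π ^ 2 * (∫ p in Ioo R R' ×ˢ Ioo (-1) 0, u p ^ 2) ≤ ∫ p in Ioo R R' ×ˢ Ioo (-1) 0, gy u p := by
  have hc : Continuous u := hu.1.continuous
  rw [← integral_const_mul]
  refine rect_mono_snd hRR (by norm_num) (by fun_prop) (continuous_gy hu.1) fun x hx => ?_
  simp only [gy_slice hu.1]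
  rw [intervalIntegral.integral_const_mul]
  exact wirtinger_both (contDiff_slice_snd hu.1 x) (hu.bot_zero (by linarith [hx.1]) hx.2)
    (hu.inner_bot_zero (by linarith [hx.1]) hx.2)

theorem arm_y_lower {R R' : ℝ} (hR : 0 ≤ R) (hRR : R ≤ R') {u : ℝ × ℝ → ℝ} (hu : AdmR R' u) :
    π ^ 2 * (∫ p in Ioo (-1) 0 ×ˢ Ioo R R', u p ^ 2) ≤ ∫ p in Ioo (-1) 0 ×ˢ Ioo R R', gx u p := by
  have hc : Continuous u := hu.1.continuous
  rw [← integral_const_mul]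
  refine rect_mono_fst (by norm_num) hRR (by fun_prop) (continuous_gx hu.1) fun y hy => ?_
  simp only [gx_slice hu.1]
  rw [intervalIntegral.integral_const_mul]
  exact wirtinger_both (contDiff_slice_fst hu.1 y) (hu.left_zero (by linarith [hy.1]) hy.2)
    (hu.inner_left_zero (by linarith [hy.1]) hy.2)

theorem lamR_mono {R R' : ℝ} (hR : 0 ≤ R) (hRR : R ≤ R') : lamR R ≤ lamR R' := by
  refine le_lamR (hR.trans hRR) fun u hu => ?_
  have hc : Continuous u := hu.1.continuous
  have hcx := continuous_gx hu.1
  have hcy := continuous_gy hu.1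
  have h1 := arm_x_lower hR hRR hu
  have h2 := arm_y_lower hR hRR hu
  have h3 := lamR_mul_le (R := R) ⟨hu.1, fun p hp => hu.2 p (DirB_mono hRR hp)⟩
  have h4 := lamR_le_pi_sq hR
  have g1 : ∫ p in Ioo R R' ×ˢ Ioo (-1) 0, gy u p ≤ ∫ p in Ioo R R' ×ˢ Ioo (-1) 0, gradSq2 u p :=
    setIntegral_mono (integrableOn_rect hcy) (integrableOn_rect (continuous_gradSq2 hu.1))
      fun p => le_add_of_nonneg_left (gx_nonneg u p)
  have g2 : ∫ p in Ioo (-1) 0 ×ˢ Ioo R R', gx u p ≤ ∫ p in Ioo (-1) 0 ×ˢ Ioo R R', gradSq2 u p :=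
    setIntegral_mono (integrableOn_rect hcx) (integrableOn_rect (continuous_gradSq2 hu.1))
      fun p => le_add_of_nonneg_right (gy_nonneg u p)
  rw [integral_GamR_split hR hRR (f := fun p => u p ^ 2) (by fun_prop),
    integral_GamR_split hR hRR (continuous_gradSq2 hu.1)]
  have p1 : 0 ≤ ∫ p in Ioo R R' ×ˢ Ioo (-1) 0, u p ^ 2 := integral_nonneg fun p => sq_nonneg _
  have p2 : 0 ≤ ∫ p in Ioo (-1) 0 ×ˢ Ioo R R', u p ^ 2 := integral_nonneg fun p => sq_nonneg _
  have q1 := mul_le_mul_of_nonneg_right h4 p1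
  have q2 := mul_le_mul_of_nonneg_right h4 p2
  linarith

/-- Integrating `strip_bound` over the horizontal strip of `Γ_1`. -/
theorem strip_x {u : ℝ × ℝ → ℝ} (hu : AdmR 1 u) :
    (π / 2 + 1 / 10) ^ 2 * (∫ p in Ioo (-1) 0 ×ˢ Ioo (-1) 0, u p ^ 2) ≤
      (∫ p in Ioo (-1) 0 ×ˢ Ioo (-1) 0, gx u p) + (∫ p in Ioo 0 1 ×ˢ Ioo (-1) 0, gx u p)
        + 2 * ∫ p in Ioo 0 1 ×ˢ Ioo (-1) 0, u p ^ 2 := by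
  have hc : Continuous u := hu.1.continuous
  have hcx := continuous_gx hu.1
  have hc2 : Continuous fun p => u p ^ 2 := by fun_prop
  have hI : ∀ {f : ℝ × ℝ → ℝ} (a b : ℝ), Continuous f →
      IntervalIntegrable (fun y => ∫ x in a..b, f (x, y)) volume (-1) 0 := fun {f} a b hf =>
    (intervalIntegral.continuous_parametric_intervalIntegral_of_continuous'
      (f := fun y x => f (x, y)) (by fun_prop) a b).intervalIntegrable _ _
  rw [integral_rect_swap (by norm_num) (by norm_num) hc2,
    integral_rect_swap (by norm_num) (by norm_num) hcx,
    integral_rect_swap (by norm_num) (by norm_num) hcx,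
    integral_rect_swap (by norm_num) (by norm_num) hc2,
    ← intervalIntegral.integral_const_mul, ← intervalIntegral.integral_const_mul,
    ← intervalIntegral.integral_add (hI _ _ hcx) (hI _ _ hcx),
    ← intervalIntegral.integral_add ((hI _ _ hcx).add (hI _ _ hcx)) ((hI _ _ hc2).const_mul 2)]
  refine intervalIntegral.integral_mono_on_of_le_Ioo (by norm_num) ((hI _ _ hc2).const_mul _)
    (((hI _ _ hcx).add (hI _ _ hcx)).add ((hI _ _ hc2).const_mul 2)) fun y hy => ?_
  simp only [gx_slice hu.1]
  exact strip_bound (contDiff_slice_fst hu.1 y) (hu.left_zero hy.1.le (by linarith [hy.2]))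

/-- Integrating `strip_bound` over the vertical strip of `Γ_1`. -/
theorem strip_y {u : ℝ × ℝ → ℝ} (hu : AdmR 1 u) :
    (π / 2 + 1 / 10) ^ 2 * (∫ p in Ioo (-1) 0 ×ˢ Ioo (-1) 0, u p ^ 2) ≤
      (∫ p in Ioo (-1) 0 ×ˢ Ioo (-1) 0, gy u p) + (∫ p in Ioo (-1) 0 ×ˢ Ioo 0 1, gy u p)
        + 2 * ∫ p in Ioo (-1) 0 ×ˢ Ioo 0 1, u p ^ 2 := by
  have hc : Continuous u := hu.1.continuous
  have hcy := continuous_gy hu.1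
  have hc2 : Continuous fun p => u p ^ 2 := by fun_prop
  have hI : ∀ {f : ℝ × ℝ → ℝ} (a b : ℝ), Continuous f →
      IntervalIntegrable (fun x => ∫ y in a..b, f (x, y)) volume (-1) 0 := fun {f} a b hf =>
    (intervalIntegral.continuous_parametric_intervalIntegral_of_continuous'
      (f := fun x y => f (x, y)) (by exact hf) a b).intervalIntegrable _ _
  rw [integral_rect (by norm_num) (by norm_num) hc2,
    integral_rect (by norm_num) (by norm_num) hcy,
    integral_rect (by norm_num) (by norm_num) hcy,
    integral_rect (by norm_num) (by norm_num) hc2,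
    ← intervalIntegral.integral_const_mul, ← intervalIntegral.integral_const_mul,
    ← intervalIntegral.integral_add (hI _ _ hcy) (hI _ _ hcy),
    ← intervalIntegral.integral_add ((hI _ _ hcy).add (hI _ _ hcy)) ((hI _ _ hc2).const_mul 2)]
  refine intervalIntegral.integral_mono_on_of_le_Ioo (by norm_num) ((hI _ _ hc2).const_mul _)
    (((hI _ _ hcy).add (hI _ _ hcy)).add ((hI _ _ hc2).const_mul 2)) fun x hx => ?_
  simp only [gy_slice hu.1]
  exact strip_bound (contDiff_slice_snd hu.1 x) (hu.bot_zero hx.1.le (by linarith [hx.2]))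

theorem lamR_one_gt : π ^ 2 / 2 < lamR 1 := by
  refine lt_of_lt_of_le (lt_add_of_pos_right _ (by norm_num : (0 : ℝ) < 1 / 2))
    (le_lamR (by norm_num) fun u hu => ?_)
  have hc : Continuous u := hu.1.continuous
  have hcx := continuous_gx hu.1
  have hcy := continuous_gy hu.1
  have h1 := arm_x_lower le_rfl zero_le_one hu
  have h2 := arm_y_lower le_rfl zero_le_one hu
  have h3 := strip_x hu
  have h4 := strip_y hu
  rw [gradSq2_eq, integral_add (integrableOn_GamR hcx) (integrableOn_GamR hcy),
    integral_GamR_split le_rfl zero_le_one (f := fun p => u p ^ 2) (by fun_prop),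
    integral_GamR_split le_rfl zero_le_one hcx, integral_GamR_split le_rfl zero_le_one hcy,
    GamR_eq_of_nonpos le_rfl]
  have p1 : 0 ≤ ∫ p in Ioo 0 1 ×ˢ Ioo (-1) 0, u p ^ 2 := integral_nonneg fun p => sq_nonneg _
  have p2 : 0 ≤ ∫ p in Ioo (-1) 0 ×ˢ Ioo 0 1, u p ^ 2 := integral_nonneg fun p => sq_nonneg _
  have p3 : 0 ≤ ∫ p in Ioo (-1) 0 ×ˢ Ioo (-1) 0, u p ^ 2 := integral_nonneg fun p => sq_nonneg _
  have c1 : π ^ 2 / 2 + 1 / 2 ≤ 2 * (π / 2 + 1 / 10) ^ 2 := by nlinarith [pi_gt_three]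
  have c2 : π ^ 2 / 2 + 1 / 2 ≤ π ^ 2 - 2 := by nlinarith [pi_gt_three]
  have q1 := mul_le_mul_of_nonneg_right c2 p1
  have q2 := mul_le_mul_of_nonneg_right c2 p2
  have q3 := mul_le_mul_of_nonneg_right c1 p3
  linarith

theorem isPot_lamR : IsPot lamR where
  left := fun _ h1 h2 => lamR_left h1 h2
  mono := fun _ hs _ _ hst => lamR_mono hs hst
  le := fun _ h => lamR_le_pi_sq h
  big := ⟨1, one_pos, lamR_one_gt⟩

/-- Proposition 3.8: there is a unique `L* ∈ (−1,∞)` minimizing the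
Sturm–Liouville ground energy `μ`; moreover `L* ∈ (−1,0)` and `μ(L*) = λ(L*)` where
`λ(t) = λ₁(Γ_t)`. -/
theorem muSL_unique_minimizer :
    ∃ Lstar : ℝ, Lstar ∈ Set.Ioo (-1 : ℝ) 0 ∧
      muSL Lstar = sInf {m | ∃ L : ℝ, -1 < L ∧ m = muSL L} ∧
      muSL Lstar = lamR Lstar ∧
      ∀ L : ℝ, -1 < L → muSL L = sInf {m | ∃ L' : ℝ, -1 < L' ∧ m = muSL L'} →
        L = Lstar := by
  obtain ⟨a, ha1, ha0, hmu, hlt⟩ := isPot_lamR.unique_minimizer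
  have he : ∀ L, muSL L = muV lamR L := fun L => rfl
  have hinf : sInf {m | ∃ L : ℝ, -1 < L ∧ m = muSL L} = muSL a := by
    refine IsLeast.csInf_eq ⟨⟨a, ha1, rfl⟩, ?_⟩
    rintro m ⟨L, hL, rfl⟩
    by_cases h : L = a
    · rw [h]
    · rw [he, he]; exact (hlt L hL h).le
  refine ⟨a, ⟨ha1, ha0⟩, hinf.symm, (he a).trans hmu, fun L hL h => ?_⟩
  by_contra hne
  rw [hinf, he, he] at h
  exact absurd h (hlt L hL hne).ne'
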